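/- arXiv:2601.13426 — 2 statements merged into one kernel-verified Lean document; each statement's English description precedes it below -/
import Mathlib

section
/- Exact matching rate in the dual service-range model with zero base range: Fix b > 0 and p ∈ (0,1). In the dual service-range model with base range 0, the expected maximum matching size satisfies lim_{n→∞} ν_n(0, b, p)/n = (e^{2pb} − e^{2b}) / (e^{2pb} − (1/p)·e^{2b}). -/
open MeasureTheory
open scoped Classical

noncomputable section

/-- A matching of a bipartite compatibility relation, given as a finite set of
supply-demand pairs with compatible endpoints and pairwise distinct coordinates. -/
def IsBipMatching {a b : ℕ} (adj : Fin a → Fin b → Prop) (M : Finset (Fin a × Fin b)) : Prop :=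
  (∀ e ∈ M, adj e.1 e.2) ∧
    ∀ e ∈ M, ∀ e' ∈ M, e ≠ e' → e.1 ≠ e'.1 ∧ e.2 ≠ e'.2

/-- The maximum cardinality of a matching of the bipartite compatibility relation. -/
def matchingNumber {a b : ℕ} (adj : Fin a → Fin b → Prop) : ℕ :=
  sSup {c | ∃ M : Finset (Fin a × Fin b), IsBipMatching adj M ∧ M.card = c}

/-- The uniform probability measure on `[0,1]`. -/
def unifI : Measure ℝ := volume.restrict (Set.Icc (0 : ℝ) 1)

/-- The expected maximum matching size `ν_n(r, b, p)` in the dual service-range model: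
`n` supply and `n` demand nodes i.i.d. uniform on `[0,1]`; exactly `⌊pn⌋` supply nodes
are flexible with range `r + b`, the rest have range `r`; supply `i` serves demand `j`
iff `|s_i - d_j| ≤ r_i / n`. -/
def nuDual (n : ℕ) (r b p : ℝ) : ℝ :=
  ∫ S : Fin n → ℝ, ∫ D : Fin n → ℝ,
      (matchingNumber (fun i j : Fin n =>
        |S i - D j| ≤ (if (i : ℕ) < Nat.floor (p * n) then r + b else r) / (n : ℝ)) : ℝ)
    ∂(Measure.pi fun _ => unifI) ∂(Measure.pi fun _ => unifI)

theorem mN_bdd {a b : ℕ} (adj : Fin a → Fin b → Prop) :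
    BddAbove {c | ∃ M : Finset (Fin a × Fin b), IsBipMatching adj M ∧ M.card = c} := by
  refine ⟨Fintype.card (Fin a × Fin b), ?_⟩
  rintro c ⟨M, _, rfl⟩
  exact Finset.card_le_univ M

theorem le_mN {a b : ℕ} {adj : Fin a → Fin b → Prop} {M : Finset (Fin a × Fin b)}
    (h : IsBipMatching adj M) : M.card ≤ matchingNumber adj :=
  le_csSup (mN_bdd adj) ⟨M, h, rfl⟩

theorem exists_mN {a b : ℕ} (adj : Fin a → Fin b → Prop) :
    ∃ M : Finset (Fin a × Fin b), IsBipMatching adj M ∧ M.card = matchingNumber adj := by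
  have h := Nat.sSup_mem (s := {c | ∃ M : Finset (Fin a × Fin b), IsBipMatching adj M ∧ M.card = c})
    ⟨0, ∅, ⟨by simp, by simp⟩, by simp⟩ (mN_bdd adj)
  exact h

theorem IsBipMatching.sub {a b : ℕ} {adj adj' : Fin a → Fin b → Prop}
    {M M' : Finset (Fin a × Fin b)} (h : IsBipMatching adj M) (hs : M' ⊆ M)
    (h' : ∀ e ∈ M', adj' e.1 e.2) : IsBipMatching adj' M' :=
  ⟨h', fun e he e' he' hne => h.2 e (hs he) e' (hs he') hne⟩

theorem IsBipMatching.inj1 {a b : ℕ} {adj : Fin a → Fin b → Prop}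
    {M : Finset (Fin a × Fin b)} (h : IsBipMatching adj M) {e e'} (he : e ∈ M) (he' : e' ∈ M)
    (hh : e.1 = e'.1) : e = e' := by
  by_contra hne
  exact (h.2 e he e' he' hne).1 hh

theorem IsBipMatching.inj2 {a b : ℕ} {adj : Fin a → Fin b → Prop}
    {M : Finset (Fin a × Fin b)} (h : IsBipMatching adj M) {e e'} (he : e ∈ M) (he' : e' ∈ M)
    (hh : e.2 = e'.2) : e = e' := by
  by_contra hne
  exact (h.2 e he e' he' hne).2 hh

theorem mN_le {a b : ℕ} {adj : Fin a → Fin b → Prop} {c : ℕ}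
    (h : ∀ M, IsBipMatching adj M → M.card ≤ c) : matchingNumber adj ≤ c := by
  obtain ⟨M, hM, he⟩ := exists_mN adj
  rw [← he]; exact h M hM

theorem mN_le_card {a b : ℕ} (adj : Fin a → Fin b → Prop) : matchingNumber adj ≤ a := by
  refine mN_le fun M hM => ?_
  have := Finset.card_le_card_of_injOn (s := M) (t := Finset.univ) Prod.fst (by simp)
    (fun e he e' he' hh => hM.inj1 he he' hh)
  simpa using this

theorem mN_mono {a b : ℕ} {adj adj' : Fin a → Fin b → Prop} (h : ∀ i j, adj i j → adj' i j) :
    matchingNumber adj ≤ matchingNumber adj' :=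
  mN_le fun _ hM => le_mN (hM.sub (Finset.Subset.refl _) fun e he => h _ _ (hM.1 e he))

/-- differing edges -/
theorem mN_le_add_edges {a b : ℕ} (adj adj' : Fin a → Fin b → Prop)
    (T : Finset (Fin a × Fin b)) (h : ∀ i j, adj i j → adj' i j ∨ (i, j) ∈ T) :
    matchingNumber adj ≤ matchingNumber adj' + T.card := by
  refine mN_le fun M hM => ?_
  have h1 : (M \ T).card ≤ matchingNumber adj' := by
    refine le_mN (hM.sub Finset.sdiff_subset fun e he => ?_)
    rw [Finset.mem_sdiff] at he
    exact (h _ _ (hM.1 e he.1)).resolve_right he.2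
  have h2 := Finset.card_le_card_sdiff_add_card (s := M) (t := T)
  omega

theorem mN_le_add_verts {a b : ℕ} (adj adj' : Fin a → Fin b → Prop)
    (X : Finset (Fin a)) (Y : Finset (Fin b))
    (h : ∀ i j, adj i j → adj' i j ∨ i ∈ X ∨ j ∈ Y) :
    matchingNumber adj ≤ matchingNumber adj' + X.card + Y.card := by
  refine mN_le fun M hM => ?_
  have hX : (M.filter fun e => e.1 ∈ X).card ≤ X.card := by
    refine Finset.card_le_card_of_injOn Prod.fst (fun e he => ?_) (fun e he e' he' hh => ?_)
    · simp at he; simpa using he.2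
    · simp at he he'; exact hM.inj1 he.1 he'.1 hh
  have hY : (M.filter fun e => e.2 ∈ Y).card ≤ Y.card := by
    refine Finset.card_le_card_of_injOn Prod.snd (fun e he => ?_) (fun e he e' he' hh => ?_)
    · simp at he; simpa using he.2
    · simp at he he'; exact hM.inj2 he.1 he'.1 hh
  have h1 : (M.filter fun e => ¬ (e.1 ∈ X ∨ e.2 ∈ Y)).card ≤ matchingNumber adj' := by
    refine le_mN (hM.sub (Finset.filter_subset _ _) fun e he => ?_)
    rw [Finset.mem_filter] at he
    exact (h _ _ (hM.1 e he.1)).resolve_right he.2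
  have h2 := Finset.card_filter_add_card_filter_not (s := M) (fun e => (e.1 ∈ X ∨ e.2 ∈ Y))
  have h3 : (M.filter fun e => (e.1 ∈ X ∨ e.2 ∈ Y)).card ≤ X.card + Y.card := by
    rw [Finset.filter_or]
    exact (Finset.card_union_le _ _).trans (by omega)
  omega

theorem mN_map {a b a' b' : ℕ} (adj : Fin a → Fin b → Prop) (adj' : Fin a' → Fin b' → Prop)
    (f : Fin a → Fin a') (g : Fin b → Fin b') (h : ∀ i j, adj i j → adj' (f i) (g j))
    (hf : ∀ i j i' j', adj i j → adj i' j' → f i = f i' → i = i')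
    (hg : ∀ i j i' j', adj i j → adj i' j' → g j = g j' → j = j') :
    matchingNumber adj ≤ matchingNumber adj' := by
  refine mN_le fun M hM => ?_
  have hinj : Set.InjOn (fun e : Fin a × Fin b => (f e.1, g e.2)) (M : Set (Fin a × Fin b)) := by
    intro e he e' he' hh
    simp only [Prod.mk.injEq] at hh
    exact hM.inj1 he he' (hf _ _ _ _ (hM.1 e he) (hM.1 e' he') hh.1)
  rw [← Finset.card_image_of_injOn hinj]
  refine le_mN ⟨?_, ?_⟩
  · intro e he
    obtain ⟨e', he', rfl⟩ := Finset.mem_image.1 he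
    exact h _ _ (hM.1 e' he')
  · intro e he e' he' hne
    obtain ⟨e, hE, rfl⟩ := Finset.mem_image.1 he
    obtain ⟨e', hE', rfl⟩ := Finset.mem_image.1 he'
    have hne' : e ≠ e' := fun h => hne (by rw [h])
    constructor
    · intro hh
      exact hne' (hM.inj1 hE hE' (hf _ _ _ _ (hM.1 e hE) (hM.1 e' hE') hh))
    · intro hh
      exact hne' (hM.inj2 hE hE' (hg _ _ _ _ (hM.1 e hE) (hM.1 e' hE') hh))

theorem mN_greedy {a b : ℕ} (adj : Fin a → Fin b → Prop) (i0 : Fin a) (j0 : Fin b)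
    (h0 : adj i0 j0) (hx : ∀ i j, adj i0 j → adj i j0 → adj i j) :
    matchingNumber adj = 1 + matchingNumber (fun i j => i ≠ i0 ∧ j ≠ j0 ∧ adj i j) := by
  apply le_antisymm
  · refine mN_le fun M hM => ?_
    set N := M.filter (fun e => e.1 ≠ i0 ∧ e.2 ≠ j0) with hN
    by_cases h1 : ∃ j, (i0, j) ∈ M ∧ j ≠ j0
    · by_cases h2 : ∃ i, (i, j0) ∈ M ∧ i ≠ i0
      · obtain ⟨j, hj, hj'⟩ := h1
        obtain ⟨i, hi, hi'⟩ := h2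
        have hnot : (i, j) ∉ N := by
          intro hh
          have h3 := (Finset.mem_filter.1 hh).1
          have := hM.inj2 h3 hj rfl
          simp at this; exact hi' this
        have hm : IsBipMatching (fun i j => i ≠ i0 ∧ j ≠ j0 ∧ adj i j) (insert (i, j) N) := by
          have key : ∀ e ∈ N, e.1 ≠ i ∧ e.2 ≠ j := by
            intro e he
            rw [hN, Finset.mem_filter] at he
            constructor
            · rintro rfl
              have := hM.inj1 he.1 hi rfl
              rw [this] at he; exact he.2.2 rfl
            · rintro rfl
              have := hM.inj2 he.1 hj rfl
              rw [this] at he; exact he.2.1 rfl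
          constructor
          · intro e he
            rcases Finset.mem_insert.1 he with rfl | he
            · exact ⟨hi', hj', hx _ _ (hM.1 _ hj) (hM.1 _ hi)⟩
            · have := (Finset.mem_filter.1 he)
              exact ⟨this.2.1, this.2.2, hM.1 _ this.1⟩
          · intro e he e' he' hne
            rcases Finset.mem_insert.1 he with rfl | he
            · rcases Finset.mem_insert.1 he' with rfl | he'
              · exact absurd rfl hne
              · exact ⟨fun h => (key _ he').1 h.symm, fun h => (key _ he').2 h.symm⟩
            · rcases Finset.mem_insert.1 he' with rfl | he'
              · exact key _ he
              · exact hM.2 e (Finset.mem_filter.1 he).1 e' (Finset.mem_filter.1 he').1 hne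
        have h4 := le_mN hm
        rw [Finset.card_insert_of_notMem hnot] at h4
        have h5 : M ⊆ insert (i0, j) (insert (i, j0) N) := by
          intro e he
          rw [Finset.mem_insert, Finset.mem_insert]
          by_cases e1 : e.1 = i0
          · left; exact hM.inj1 he hj e1
          · by_cases e2 : e.2 = j0
            · right; left; exact hM.inj2 he hi e2
            · right; right; exact Finset.mem_filter.2 ⟨he, e1, e2⟩
        have h6 := Finset.card_le_card h5
        have h7 := Finset.card_insert_le (i0, j) (insert (i, j0) N)
        have h8 := Finset.card_insert_le (i, j0) N
        omega
      · obtain ⟨j, hj, hj'⟩ := h1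
        have h4 : N.card ≤ matchingNumber (fun i j => i ≠ i0 ∧ j ≠ j0 ∧ adj i j) :=
          le_mN (hM.sub (Finset.filter_subset _ _) fun e he => by
            have := (Finset.mem_filter.1 he)
            exact ⟨this.2.1, this.2.2, hM.1 _ this.1⟩)
        have h5 : M ⊆ insert (i0, j) N := by
          intro e he
          rw [Finset.mem_insert]
          by_cases e1 : e.1 = i0
          · left; exact hM.inj1 he hj e1
          · right
            refine Finset.mem_filter.2 ⟨he, e1, fun e2 => h2 ⟨e.1, ?_, e1⟩⟩
            rw [← e2]; exact he
        have h6 := Finset.card_le_card h5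
        have h7 := Finset.card_insert_le (i0, j) N
        omega
    · have h4 : N.card ≤ matchingNumber (fun i j => i ≠ i0 ∧ j ≠ j0 ∧ adj i j) :=
        le_mN (hM.sub (Finset.filter_subset _ _) fun e he => by
          have := (Finset.mem_filter.1 he)
          exact ⟨this.2.1, this.2.2, hM.1 _ this.1⟩)
      have h5 : (M \ N).card ≤ 1 := by
        rw [Finset.card_le_one]
        have key : ∀ e ∈ M \ N, e ∈ M ∧ e.2 = j0 := by
          intro e he
          rw [Finset.mem_sdiff] at he
          refine ⟨he.1, ?_⟩
          by_contra e2
          by_cases e1 : e.1 = i0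
          · exact h1 ⟨e.2, by rw [← e1]; exact he.1, e2⟩
          · exact he.2 (Finset.mem_filter.2 ⟨he.1, e1, e2⟩)
        intro e he e' he'
        exact hM.inj2 (key e he).1 (key e' he').1 ((key e he).2.trans (key e' he').2.symm)
      have h2 := Finset.card_le_card_sdiff_add_card (s := M) (t := N)
      omega
  · obtain ⟨M, hM, he⟩ := exists_mN (fun i j => i ≠ i0 ∧ j ≠ j0 ∧ adj i j)
    have hnot : (i0, j0) ∉ M := fun h => (hM.1 _ h).1 rfl
    rw [← he, add_comm, ← Finset.card_insert_of_notMem hnot]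
    refine le_mN ⟨?_, ?_⟩
    · intro e he
      rcases Finset.mem_insert.1 he with rfl | he
      · exact h0
      · exact (hM.1 e he).2.2
    · intro e he e' he' hne
      rcases Finset.mem_insert.1 he with rfl | he
      · rcases Finset.mem_insert.1 he' with rfl | he'
        · exact absurd rfl hne
        · exact ⟨(hM.1 _ he').1.symm, (hM.1 _ he').2.1.symm⟩
      · rcases Finset.mem_insert.1 he' with rfl | he'
        · exact ⟨(hM.1 _ he).1, (hM.1 _ he).2.1⟩
        · exact hM.2 e he e' he' hne

def wt {K : ℕ} (α : ℝ) (A : Finset (Fin K)) : ℝ := α ^ A.card * (1 - α) ^ (K - A.card)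

def EE {K : ℕ} (α : ℝ) (F : Finset (Fin K) → ℝ) : ℝ := ∑ A, wt α A * F A

theorem sum_split {K : ℕ} (x : Fin K) (G : Finset (Fin K) → ℝ) :
    ∑ A, G A = ∑ A ∈ (Finset.univ.erase x).powerset, (G A + G (insert x A)) := by
  have h : (Finset.univ : Finset (Fin K)) = insert x (Finset.univ.erase x) := by simp
  rw [Finset.sum_add_distrib, ← Finset.sum_powerset_insert (by simp), ← h, Finset.powerset_univ]

theorem EE_split {K : ℕ} (α : ℝ) (x : Fin K) (F : Finset (Fin K) → ℝ) :
    EE α F = α * EE α (fun A => F (insert x A)) + (1 - α) * EE α (fun A => F (A.erase x)) := by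
  unfold EE
  rw [sum_split x, sum_split x, sum_split x, Finset.mul_sum, Finset.mul_sum,
    ← Finset.sum_add_distrib]
  refine Finset.sum_congr rfl fun A hA => ?_
  have hx : x ∉ A := by
    intro h
    have := Finset.mem_powerset.1 hA h
    simp at this
  have hc : A.card + 1 ≤ K := by
    have := Finset.card_le_univ (insert x A)
    rw [Finset.card_insert_of_notMem hx] at this
    simpa using this
  simp only [Finset.insert_idem, Finset.erase_insert hx, Finset.erase_eq_of_notMem hx, wt,
    Finset.card_insert_of_notMem hx]
  obtain ⟨d, hd⟩ : ∃ d, K = A.card + 1 + d := ⟨K - (A.card + 1), by omega⟩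
  have e1 : K - A.card = d + 1 := by omega
  have e2 : K - (A.card + 1) = d := by omega
  rw [e1, e2]
  ring

theorem EE_one {K : ℕ} (α : ℝ) : EE (K := K) α (fun _ => 1) = 1 := by
  unfold EE wt
  have := Finset.sum_pow_mul_eq_add_pow α (1 - α) (Finset.univ : Finset (Fin K))
  simp only [Finset.powerset_univ, Finset.card_univ, Fintype.card_fin] at this
  simp [this]

theorem EE_const {K : ℕ} (α c : ℝ) : EE (K := K) α (fun _ => c) = c := by
  have := EE_one (K := K) α
  unfold EE at this ⊢
  rw [← Finset.sum_mul]
  simp at this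
  rw [this, one_mul]

theorem EE_add {K : ℕ} (α : ℝ) (F G : Finset (Fin K) → ℝ) :
    EE α (fun A => F A + G A) = EE α F + EE α G := by
  unfold EE; rw [← Finset.sum_add_distrib]; simp only [mul_add]

theorem EE_smul {K : ℕ} (α c : ℝ) (F : Finset (Fin K) → ℝ) :
    EE α (fun A => c * F A) = c * EE α F := by
  unfold EE; rw [Finset.mul_sum]; exact Finset.sum_congr rfl fun _ _ => by ring

theorem wt_nonneg {K : ℕ} {α : ℝ} (h0 : 0 ≤ α) (h1 : α ≤ 1) (A : Finset (Fin K)) :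
    0 ≤ wt α A := mul_nonneg (pow_nonneg h0 _) (pow_nonneg (by linarith) _)

theorem EE_mono {K : ℕ} {α : ℝ} (h0 : 0 ≤ α) (h1 : α ≤ 1) {F G : Finset (Fin K) → ℝ}
    (h : ∀ A, F A ≤ G A) : EE α F ≤ EE α G :=
  Finset.sum_le_sum fun A _ => mul_le_mul_of_nonneg_left (h A) (wt_nonneg h0 h1 A)

theorem EE_swap {K : ℕ} (α β : ℝ) (F : Finset (Fin K) → Finset (Fin K) → ℝ) :
    EE α (fun A => EE β (fun B => F A B)) = EE β (fun B => EE α (fun A => F A B)) := by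
  unfold EE
  simp only [Finset.mul_sum]
  rw [Finset.sum_comm]
  exact Finset.sum_congr rfl fun _ _ => Finset.sum_congr rfl fun _ _ => by ring

/-- lattice matching number -/
def lat {K : ℕ} (w x y : ℕ) (A B : Finset (Fin K)) : ℕ :=
  matchingNumber (fun i j : Fin K => x ≤ (i : ℕ) ∧ y ≤ (j : ℕ) ∧ i ∈ A ∧ j ∈ B ∧
    (i : ℕ) ≤ j + w ∧ (j : ℕ) ≤ i + w)

theorem lat_congr {K : ℕ} {w x y x' y' : ℕ} {A B A' B' : Finset (Fin K)}
    (h : ∀ i j : Fin K, (i : ℕ) ≤ j + w → (j : ℕ) ≤ i + w →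
      ((x ≤ (i : ℕ) ∧ y ≤ (j : ℕ) ∧ i ∈ A ∧ j ∈ B) ↔
        (x' ≤ (i : ℕ) ∧ y' ≤ (j : ℕ) ∧ i ∈ A' ∧ j ∈ B'))) :
    lat w x y A B = lat w x' y' A' B' := by
  unfold lat
  congr 1
  funext i j
  have := h i j
  apply propext
  tauto

theorem lat_zero {K : ℕ} {w x y : ℕ} {A B : Finset (Fin K)} (h : K ≤ x ∨ K ≤ y) :
    lat w x y A B = 0 := by
  unfold lat
  refine Nat.le_zero.1 (mN_le fun M hM => ?_)
  rw [Nat.le_zero, Finset.card_eq_zero, Finset.eq_empty_iff_forall_notMem]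
  intro e he
  have := hM.1 e he
  have h1 := e.1.2
  have h2 := e.2.2
  omega

theorem lat_match {K : ℕ} {w : ℕ} (x y : Fin K) {A B : Finset (Fin K)}
    (h1 : (x : ℕ) ≤ y + w) (h2 : (y : ℕ) ≤ x + w) :
    lat w x y (insert x A) (insert y B) = 1 + lat w (x + 1) (y + 1) A B := by
  unfold lat
  rw [mN_greedy _ x y (by simp; omega)]
  · congr 2
    funext i j
    apply propext
    simp only [Finset.mem_insert, ne_eq, Fin.ext_iff]
    constructor
    · rintro ⟨h1, h2, h3, h4, h5 | h5, h6 | h6, h7, h8⟩ <;> first | omega | skip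
      exact ⟨by omega, by omega, h5, h6, h7, h8⟩
    · rintro ⟨h3, h4, h5, h6, h7, h8⟩
      exact ⟨by omega, by omega, by omega, by omega, Or.inr h5, Or.inr h6, h7, h8⟩
  · rintro i j ⟨a1, a2, a3, a4, a5, a6⟩ ⟨b1, b2, b3, b4, b5, b6⟩
    exact ⟨b1, a2, b3, a4, by omega, by omega⟩

def UU (K w : ℕ) (α β : ℝ) (x y : ℕ) : ℝ :=
  EE α fun A : Finset (Fin K) => EE β fun B => (lat w x y A B : ℝ)

def HH (K w : ℕ) (α β : ℝ) (x : ℕ) (y : Fin K) : ℝ :=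
  EE α fun A : Finset (Fin K) => EE β fun B => (lat w x y A (insert y B) : ℝ)

theorem UU_rec {K w : ℕ} {α β : ℝ} (x : ℕ) (y : Fin K) :
    UU K w α β x y = β * HH K w α β x y + (1 - β) * UU K w α β x (y + 1) := by
  unfold UU HH
  rw [← EE_smul, ← EE_smul, ← EE_add]
  congr 1
  funext A
  rw [EE_split β y]
  congr 3
  funext B
  congr 1
  refine lat_congr fun i j _ _ => ?_
  simp only [Finset.mem_erase, ne_eq, Fin.ext_iff]
  constructor
  · rintro ⟨h1, h2, h3, h4, h5⟩
    exact ⟨h1, by omega, h3, h5⟩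
  · rintro ⟨h1, h2, h3, h4⟩
    exact ⟨h1, by omega, h3, by omega, h4⟩

theorem HH_rec {K w : ℕ} {α β : ℝ} (x y : Fin K)
    (h1 : (x : ℕ) ≤ y + w) (h2 : (y : ℕ) ≤ x + w) :
    HH K w α β x y = α * (1 + UU K w α β (x + 1) (y + 1)) + (1 - α) * HH K w α β (x + 1) y := by
  unfold UU HH
  rw [EE_split α x]
  have e1 : ∀ A : Finset (Fin K), (EE β fun B => (lat w x y (insert x A) (insert y B) : ℝ)) =
      1 + EE β fun B => (lat w (x + 1) (y + 1) A B : ℝ) := by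
    intro A
    simp only [lat_match x y h1 h2]
    push_cast
    rw [EE_add, EE_const]
  simp only [e1]
  rw [EE_add, EE_const]
  congr 3
  funext A
  congr 1
  funext B
  congr 1
  refine lat_congr fun i j _ _ => ?_
  simp only [Finset.mem_erase, ne_eq, Fin.ext_iff]
  constructor
  · rintro ⟨h1, h2, ⟨h3, h4⟩, h5⟩
    exact ⟨by omega, by omega, h4, h5⟩
  · rintro ⟨h1, h2, h3, h4⟩
    exact ⟨by omega, by omega, ⟨by omega, h3⟩, h4⟩

theorem HH_drop {K w : ℕ} {α β : ℝ} (x : ℕ) (y : Fin K) (h : (y : ℕ) + w < x) :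
    HH K w α β x y = UU K w α β x (y + 1) := by
  unfold UU HH
  congr 1
  funext A
  congr 1
  funext B
  congr 1
  refine lat_congr fun i j _ _ => ?_
  simp only [Finset.mem_insert, Fin.ext_iff]
  constructor
  · rintro ⟨h1, h2, h3, h4⟩
    exact ⟨h1, by omega, h3, h4.resolve_left (by omega)⟩
  · rintro ⟨h1, h2, h3, h4⟩
    exact ⟨h1, by omega, h3, Or.inr h4⟩

theorem UU_drop {K w : ℕ} {α β : ℝ} (x y : ℕ) (h : x + w < y) :
    UU K w α β x y = UU K w α β (x + 1) y := by
  unfold UU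
  congr 1
  funext A
  congr 1
  funext B
  congr 1
  refine lat_congr fun i j _ _ => ?_
  constructor
  · rintro ⟨h1, h2, h3, h4⟩
    exact ⟨by omega, by omega, h3, h4⟩
  · rintro ⟨h1, h2, h3, h4⟩
    exact ⟨by omega, by omega, h3, h4⟩

theorem UU_zero {K w : ℕ} {α β : ℝ} (x y : ℕ) (h : K ≤ x ∨ K ≤ y) :
    UU K w α β x y = 0 := by
  unfold UU
  simp only [lat_zero h, Nat.cast_zero, EE_const]

theorem HH_zero {K w : ℕ} {α β : ℝ} (x : ℕ) (y : Fin K) (h : K ≤ x) :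
    HH K w α β x y = 0 := by
  unfold HH
  simp only [lat_zero (Or.inl h), Nat.cast_zero, EE_const]

theorem conv_abs {a s t C : ℝ} (h0 : 0 ≤ a) (h1 : a ≤ 1) (hs : |s| ≤ C) (ht : |t| ≤ C) :
    |a * s + (1 - a) * t| ≤ C := by
  rw [abs_le] at *
  constructor <;> nlinarith

theorem verif {K w : ℕ} {α β l Q : ℝ} (v h : ℤ → ℝ) (hα0 : 0 ≤ α) (hα1 : α ≤ 1)
    (hβ0 : 0 ≤ β) (hβ1 : β ≤ 1) (hl : 0 ≤ l)
    (hv : ∀ z : ℤ, -w ≤ z → z ≤ w → v z + l = β * h z + (1 - β) * v (z - 1))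
    (hh : ∀ z : ℤ, -w ≤ z → z ≤ w → h z = α * (1 + v z) + (1 - α) * h (z + 1))
    (bc1 : v (-w - 1) = v (-w)) (bc2 : h (w + 1) = v w)
    (hQv : ∀ z : ℤ, -w ≤ z → z ≤ w + 1 → |v z| ≤ Q)
    (hQh : ∀ z : ℤ, -w ≤ z → z ≤ w + 1 → |h z| ≤ Q) :
    ∀ (N x y : ℕ), x ≤ K → y ≤ K → (K - x) + (K - y) = N →
      ((hy : y < K) → -(w : ℤ) ≤ (x : ℤ) - y → (x : ℤ) - y ≤ w + 1 →
        |HH K w α β x ⟨y, hy⟩ - (l * ((K : ℝ) - y) + h ((x : ℤ) - y))| ≤ Q + l * (w + 2)) ∧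
      (-(w : ℤ) ≤ (x : ℤ) - y → (x : ℤ) - y ≤ w →
        |UU K w α β x y - (l * ((K : ℝ) - y) + v ((x : ℤ) - y) + l)| ≤ Q + l * (w + 2)) := by
  intro N
  induction N using Nat.strong_induction_on with
  | _ N ih =>
  intro x y hx hy hN
  have hw : (0 : ℝ) ≤ w := Nat.cast_nonneg w
  have hH : (hy : y < K) → -(w : ℤ) ≤ (x : ℤ) - y → (x : ℤ) - y ≤ w + 1 →
        |HH K w α β x ⟨y, hy⟩ - (l * ((K : ℝ) - y) + h ((x : ℤ) - y))| ≤ Q + l * (w + 2) := by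
    intro hy' z1 z2
    rcases Nat.lt_or_ge x K with hxK | hxK
    · by_cases hz : (x : ℤ) - y ≤ w
      · have r := HH_rec (K := K) (w := w) (α := α) (β := β) ⟨x, hxK⟩ ⟨y, hy'⟩
          (by simp; omega) (by simp; omega)
        simp only at r
        have i1 := (ih _ (by omega) (x + 1) (y + 1) (by omega) (by omega) rfl).2
          (by push_cast; omega) (by push_cast; omega)
        have i2 := (ih _ (by omega) (x + 1) y (by omega) (by omega) rfl).1 hy'
          (by push_cast; omega) (by push_cast; omega)
        have c1 : ((x + 1 : ℕ) : ℤ) - ((y + 1 : ℕ) : ℤ) = (x : ℤ) - y := by push_cast; ring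
        have c2 : ((x + 1 : ℕ) : ℤ) - (y : ℤ) = (x : ℤ) - y + 1 := by push_cast; ring
        rw [c1] at i1
        rw [c2] at i2
        rw [r, hh _ z1 hz]
        refine le_trans (le_of_eq ?_) (conv_abs hα0 hα1 i1 i2)
        congr 1
        push_cast
        ring
      · have hz' : (x : ℤ) - y = w + 1 := by omega
        have r := HH_drop (K := K) (w := w) (α := α) (β := β) x ⟨y, hy'⟩ (by simp; omega)
        simp only at r
        have i1 := (ih _ (by omega) x (y + 1) (by omega) (by omega) rfl).2
          (by push_cast; omega) (by push_cast; omega)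
        have c1 : (x : ℤ) - ((y + 1 : ℕ) : ℤ) = w := by push_cast; omega
        rw [c1] at i1
        rw [r, hz', bc2]
        refine le_trans (le_of_eq ?_) i1
        congr 1
        push_cast
        ring
    · have hxe : x = K := by omega
      rw [HH_zero _ _ hxK, zero_sub, abs_neg]
      refine (abs_add_le _ _).trans ?_
      have q := hQh _ z1 z2
      have e : (K : ℝ) - y ≤ w + 1 := by
        have : ((K : ℤ) - y : ℤ) ≤ w + 1 := by rw [← hxe]; exact z2
        exact_mod_cast this
      have e0 : (0 : ℝ) ≤ (K : ℝ) - y := by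
        have : (y : ℝ) ≤ K := by exact_mod_cast hy
        linarith
      rw [abs_of_nonneg (mul_nonneg hl e0)]
      nlinarith
  refine ⟨hH, ?_⟩
  intro z1 z2
  have q := hQv _ z1 (by omega)
  rcases Nat.lt_or_ge y K with hyK | hyK
  · rcases Nat.lt_or_ge x K with hxK | hxK
    · have r := UU_rec (K := K) (w := w) (α := α) (β := β) x ⟨y, hyK⟩
      simp only at r
      have i1 := hH hyK z1 (by omega)
      have i2 : |UU K w α β x (y + 1) -
          (l * ((K : ℝ) - (y + 1)) + v ((x : ℤ) - y - 1) + l)| ≤ Q + l * (w + 2) := by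
        by_cases hz : (x : ℤ) - y = -w
        · have i2 := (ih _ (by omega) (x + 1) (y + 1) (by omega) (by omega) rfl).2
            (by push_cast; omega) (by push_cast; omega)
          rw [UU_drop x (y + 1) (by omega)]
          have c1 : ((x + 1 : ℕ) : ℤ) - ((y + 1 : ℕ) : ℤ) = -w := by push_cast; omega
          rw [c1] at i2
          rw [hz, bc1]
          push_cast at i2
          exact i2
        · have i2 := (ih _ (by omega) x (y + 1) (by omega) (by omega) rfl).2
            (by push_cast; omega) (by push_cast; omega)
          have c1 : (x : ℤ) - ((y + 1 : ℕ) : ℤ) = (x : ℤ) - y - 1 := by push_cast; ring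
          rw [c1] at i2
          push_cast at i2
          exact i2
      rw [r]
      have e := hv _ z1 z2
      refine le_trans (le_of_eq ?_) (conv_abs hβ0 hβ1 i1 i2)
      congr 1
      linear_combination (-1 : ℝ) * e
    · have hxe : x = K := by omega
      rw [UU_zero _ _ (Or.inl hxK), zero_sub, abs_neg]
      refine (abs_add_le _ _).trans (le_trans (add_le_add (abs_add_le _ _) le_rfl) ?_)
      have e : (K : ℝ) - y ≤ w := by
        have : ((K : ℤ) - y : ℤ) ≤ w := by rw [← hxe]; exact z2
        exact_mod_cast this
      have e0 : (0 : ℝ) ≤ (K : ℝ) - y := by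
        have : (y : ℝ) ≤ K := by exact_mod_cast hy
        linarith
      rw [abs_of_nonneg (mul_nonneg hl e0), abs_of_nonneg hl]
      nlinarith
  · have hye : y = K := by omega
    rw [UU_zero _ _ (Or.inr hyK), zero_sub, abs_neg, hye]
    refine (abs_add_le _ _).trans (le_trans (add_le_add (abs_add_le _ _) le_rfl) ?_)
    rw [hye] at q
    rw [abs_of_nonneg hl]
    simp only [sub_self, mul_zero, abs_zero]
    nlinarith

set_option maxHeartbeats 1000000 in
theorem lattice_value {n : ℕ} (hn : 2 ≤ n) {b p : ℝ} (hb : 0 < b) (hp0 : 0 < p) (hp1 : p < 1) :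
    ∀ R : ℝ, R = ((1 - 1 / n) / (1 - p / n)) ^ (2 * ⌊b * n⌋₊ + 1) →
    |UU (n * n) ⌊b * n⌋₊ (p / n) (1 / n) 0 0 - n * (p * (1 - R) / (1 - p * R))| ≤
      3 + (6 * b + 12) / (1 - p) ^ 2 := by
  intro R hR
  set w := ⌊b * n⌋₊ with hw
  have hn' : (2 : ℝ) ≤ n := by exact_mod_cast hn
  have hn0 : (0 : ℝ) < n := by linarith
  set ρ : ℝ := (1 - 1 / n) / (1 - p / n) with hρ
  have hd : 0 < 1 - p / n := by
    rw [sub_pos, div_lt_one hn0]; linarith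
  have hd' : (n : ℝ) - p ≠ 0 := by linarith
  have hρ' : ρ = (n - 1) / (n - p) := by
    rw [hρ]; field_simp
  have hρ0 : 0 ≤ ρ := by
    rw [hρ']; exact div_nonneg (by linarith) (by linarith)
  have hρ1 : 1 - ρ = (1 - p) / (n - p) := by
    rw [hρ']; field_simp; ring
  have hρpos : 0 < 1 - ρ := by
    rw [hρ1]; exact div_pos (by linarith) (by linarith)
  have hR0 : 0 ≤ R := hR ▸ pow_nonneg hρ0 _
  have hR1 : R ≤ 1 := hR ▸ pow_le_one₀ hρ0 (by linarith)
  have hpR : 1 - p ≤ 1 - p * R := by nlinarith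
  have hpR0 : 0 < 1 - p * R := by linarith
  have hwb : (w : ℝ) ≤ b * n := Nat.floor_le (by positivity)
  set q : ℝ := 1 / (1 - p) with hq
  have hp1' : 0 < 1 - p := by linarith
  have hq1 : 1 ≤ q := by rw [hq, le_div_iff₀ hp1']; linarith
  have hq2 : q ≤ q ^ 2 := by nlinarith
  set t : ℝ := 1 / (1 - p * R) with ht
  have ht0 : 0 < t := by rw [ht]; positivity
  have htq : t ≤ q := by
    rw [ht, hq]; exact one_div_le_one_div_of_le hp1' hpR
  have htR : t * (1 - p * R) = 1 := by rw [ht]; field_simp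
  set u : ℝ := 1 / n with hu
  have hu0 : 0 < u := by rw [hu]; positivity
  have hun : u * n = 1 := by rw [hu]; field_simp
  have hu1 : u ≤ 1 := by nlinarith
  have hα : p / n = p * u := by rw [hu]; ring
  have hρu : ρ * (1 - p * u) = 1 - u := by
    rw [hρ, hα]; rw [hα] at hd; exact div_mul_cancel₀ _ hd.ne'
  rw [hα] at hd
  set m : ℝ := 1 / (1 - ρ) with hm
  have hm0 : 0 < m := by rw [hm]; positivity
  have hmr : m * (1 - ρ) = 1 := by rw [hm]; field_simp
  have hmn : m ≤ q * n := by
    rw [hm, hρ1, one_div_div, hq, div_le_iff₀ hp1']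
    field_simp
    linarith
  set c : ℝ := -(p * u * t) with hc
  set l : ℝ := p * u * (1 - R) * t with hl
  set e : ℝ := 1 - (1 - p * u) * t with he
  have hl0 : 0 ≤ l := by
    rw [hl]
    exact mul_nonneg (mul_nonneg (by positivity) (by linarith)) ht0.le
  have hlu : l ≤ u * q := by
    rw [hl]
    calc p * u * (1 - R) * t = u * (p * (1 - R) * t) := by ring
      _ ≤ u * (1 * q) := by
        apply mul_le_mul_of_nonneg_left _ hu0.le
        apply mul_le_mul _ htq ht0.le (by norm_num)
        nlinarith
      _ = u * q := by ring
  have hcu : |c| ≤ u * q := by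
    rw [hc, abs_neg, abs_of_nonneg (by positivity)]
    calc p * u * t = u * (p * t) := by ring
      _ ≤ u * (1 * q) := by
        apply mul_le_mul_of_nonneg_left _ hu0.le
        exact mul_le_mul hp1.le htq ht0.le (by norm_num)
      _ = u * q := by ring
  have hcm : |c * m| ≤ q ^ 2 := by
    rw [abs_mul, abs_of_pos hm0]
    calc |c| * m ≤ (u * q) * (q * n) := mul_le_mul hcu hmn hm0.le (by positivity)
      _ = q ^ 2 * (u * n) := by ring
      _ = q ^ 2 := by rw [hun, mul_one]
  have hee : |e| ≤ 1 + q := by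
    rw [he, abs_le]
    have : 0 ≤ (1 - p * u) * t := mul_nonneg hd.le ht0.le
    have : (1 - p * u) * t ≤ 1 * q := by
      apply mul_le_mul _ htq ht0.le (by norm_num)
      have := mul_pos hp0 hu0
      linarith
    constructor <;> linarith
  have hcz : ∀ z : ℤ, -w ≤ z → z ≤ w + 1 → |c * z| ≤ (b + 1) * q ^ 2 := by
    intro z h1 h2
    have hz : |(z : ℝ)| ≤ w + 1 := by
      rw [abs_le]
      constructor
      · have : -(w : ℝ) ≤ z := by exact_mod_cast h1
        linarith
      · exact_mod_cast h2
    rw [abs_mul]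
    calc |c| * |(z : ℝ)| ≤ (u * q) * (b * n + 1) :=
          mul_le_mul hcu (hz.trans (by linarith)) (abs_nonneg _) (by positivity)
      _ = q * (b * (u * n) + u) := by ring
      _ ≤ q * (b + 1) := by
        rw [hun]
        apply mul_le_mul_of_nonneg_left _ (by linarith)
        linarith
      _ ≤ (b + 1) * q ^ 2 := by
        rw [mul_comm]; exact mul_le_mul_of_nonneg_left hq2 (by linarith)
  have hpw : ∀ k : ℕ, |ρ ^ k| ≤ 1 := by
    intro k
    rw [abs_of_nonneg (pow_nonneg hρ0 k)]
    exact pow_le_one₀ hρ0 (by linarith)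
  have hcmp : ∀ k : ℕ, |c * m * ρ ^ k| ≤ q ^ 2 := by
    intro k
    rw [abs_mul]
    calc |c * m| * |ρ ^ k| ≤ q ^ 2 * 1 := mul_le_mul hcm (hpw k) (abs_nonneg _) (by positivity)
      _ = q ^ 2 := mul_one _
  have hcmp' : ∀ k : ℕ, |p * (c * m * ρ ^ k)| ≤ q ^ 2 := by
    intro k
    rw [abs_mul, abs_of_pos hp0]
    calc p * |c * m * ρ ^ k| ≤ 1 * q ^ 2 :=
          mul_le_mul hp1.le (hcmp k) (abs_nonneg _) (by norm_num)
      _ = q ^ 2 := one_mul _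
  have hlw : l * (w + 2) ≤ (b + 2) * q ^ 2 := by
    calc l * (w + 2) ≤ (u * q) * (b * n + 2) := mul_le_mul hlu (by linarith) (by positivity) (by positivity)
      _ = q * (b * (u * n) + 2 * u) := by ring
      _ ≤ q * (b + 2) := by
        rw [hun]
        apply mul_le_mul_of_nonneg_left _ (by linarith)
        linarith
      _ ≤ (b + 2) * q ^ 2 := by
        rw [mul_comm]; exact mul_le_mul_of_nonneg_left hq2 (by linarith)
  have hQv : ∀ z : ℤ, -w ≤ z → z ≤ w + 1 →
      |c * z + c * m * ρ ^ (z + w + 1).toNat| ≤ 1 + (b + 3) * q ^ 2 := by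
    intro z h1 h2
    refine (abs_add_le _ _).trans ?_
    have := hcz z h1 h2
    have := hcmp (z + w + 1).toNat
    linarith
  clear_value c l e m t u q ρ w
  have hmain := verif (K := n * n) (w := w) (α := p * u) (β := u) (l := l)
    (Q := 1 + (b + 3) * q ^ 2)
    (fun z => c * z + c * m * ρ ^ (z + w + 1).toNat)
    (fun z => c * z + e + p * (c * m * ρ ^ (z + w + 1).toNat))
    (by positivity) (by linarith) hu0.le hu1 hl0
    (by
      intro z h1 h2
      have e1 : (z + w + 1).toNat = (z - 1 + w + 1).toNat + 1 := by omega
      simp only [e1, pow_succ]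
      push_cast
      generalize ρ ^ (z - 1 + (w : ℤ) + 1).toNat = X
      have k1 : l = u * e - (1 - u) * c := by
        rw [hl, he, hc]
        linear_combination u * htR
      have k2 : ρ = u * p * ρ + (1 - u) := by linear_combination hρu
      linear_combination k1 + c * m * X * k2)
    (by
      intro z h1 h2
      have e1 : (z + 1 + w + 1).toNat = (z + w + 1).toNat + 1 := by omega
      simp only [e1, pow_succ]
      push_cast
      generalize ρ ^ (z + (w : ℤ) + 1).toNat = X
      have k1 : p * u * e = p * u + (1 - p * u) * c := by
        rw [he, hc]; ring
      have k2 : p = p * u + (1 - p * u) * (p * ρ) := by linear_combination -p * hρu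
      linear_combination k1 + c * m * X * k2)
    (by
      have e1 : (-(w : ℤ) - 1 + w + 1).toNat = 0 := by omega
      have e2 : (-(w : ℤ) + w + 1).toNat = 1 := by omega
      simp only [e1, e2]
      push_cast
      linear_combination c * hmr)
    (by
      have e1 : ((w : ℤ) + 1 + w + 1).toNat = (2 * w + 1) + 1 := by omega
      have e2 : ((w : ℤ) + w + 1).toNat = 2 * w + 1 := by omega
      simp only [e1, e2, pow_succ ρ (2 * w + 1), ← hR]
      push_cast
      have k1 : u * (1 - p * ρ) = 1 - ρ := by linear_combination hρu
      have k2 : m * (1 - p * ρ) = n := by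
        linear_combination n * m * k1 + n * hmr - m * (1 - p * ρ) * hun
      have k3 : c + e = c * n * R := by
        rw [hc, he]
        linear_combination p * t * R * hun - htR
      linear_combination k3 - c * R * k2)
    hQv
    (by
      intro z h1 h2
      refine (abs_add_le _ _).trans (le_trans (add_le_add (abs_add_le _ _) le_rfl) ?_)
      have := hcz z h1 h2
      have := hcmp' (z + w + 1).toNat
      linarith)
  have h00 := (hmain _ 0 0 (by omega) (by omega) rfl).2 (by simp) (by simp)
  have hv0 := hQv 0 (by simp) (by omega)
  rw [hα]
  have hval : (n : ℝ) * (p * (1 - R) / (1 - p * R)) = l * ((n * n : ℕ) : ℝ) := by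
    rw [hl, div_eq_mul_one_div, ← ht]
    push_cast
    linear_combination (-(n * p * (1 - R) * t)) * hun
  rw [hval]
  have hqq : (6 * b + 12) / (1 - p) ^ 2 = (6 * b + 12) * q ^ 2 := by
    rw [hq]; field_simp
  rw [hqq]
  simp only [Nat.cast_zero, sub_zero, sub_self, Int.cast_zero] at h00 hv0 ⊢
  rw [abs_le] at h00 hv0 ⊢
  have hlq : l ≤ q ^ 2 := hlu.trans ((mul_le_of_le_one_left (by linarith) hu1).trans hq2)
  have hbq : 0 ≤ b * q ^ 2 := by positivity
  constructor <;> linarith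

theorem exists_perm_map {K : ℕ} (A B : Finset (Fin K)) (h : A.card = B.card) :
    ∃ σ : Equiv.Perm (Fin K), A.map σ.toEmbedding = B := by
  have e : { x // x ∈ A } ≃ { x // x ∈ B } := Fintype.equivOfCardEq (by simpa using h)
  refine ⟨e.extendSubtype, ?_⟩
  refine Finset.eq_of_subset_of_card_le ?_ (by simp [h])
  intro x hx
  obtain ⟨a, ha, rfl⟩ := Finset.mem_map.1 hx
  exact Equiv.extendSubtype_mem e a ha

def Phi {K : ℕ} (F : Finset (Fin K) → ℝ) (A : Finset (Fin K)) : ℝ :=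
  (∑ σ : Equiv.Perm (Fin K), F (A.map σ.toEmbedding)) / (Fintype.card (Equiv.Perm (Fin K)) : ℝ)

theorem Phi_perm {K : ℕ} (F : Finset (Fin K) → ℝ) (A : Finset (Fin K)) (τ : Equiv.Perm (Fin K)) :
    Phi F (A.map τ.toEmbedding) = Phi F A := by
  unfold Phi
  congr 1
  refine Fintype.sum_equiv (Equiv.mulRight τ) _ _ fun σ => ?_
  rw [Finset.map_map]
  rfl

theorem Phi_lip_le {K : ℕ} (F : Finset (Fin K) → ℝ)
    (hF : ∀ A A' : Finset (Fin K), A ⊆ A' → |F A - F A'| ≤ (A'.card : ℝ) - A.card)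
    (A B : Finset (Fin K)) (hAB : A.card ≤ B.card) :
    |Phi F A - Phi F B| ≤ |(A.card : ℝ) - B.card| := by
  obtain ⟨A', hA', hc⟩ := Finset.exists_subset_card_eq hAB
  obtain ⟨τ, hτ⟩ := exists_perm_map A A' hc.symm
  have hN : (0 : ℝ) < (Fintype.card (Equiv.Perm (Fin K)) : ℝ) := by
    exact_mod_cast Fintype.card_pos
  rw [← Phi_perm F A τ, hτ]
  unfold Phi
  rw [← sub_div, abs_div, abs_of_pos hN, div_le_iff₀ hN, ← Finset.sum_sub_distrib]
  refine (Finset.abs_sum_le_sum_abs _ _).trans ?_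
  refine (Finset.sum_le_card_nsmul _ _ |(A.card : ℝ) - B.card| fun σ _ => ?_).trans ?_
  · refine (hF _ _ (Finset.map_subset_map.2 hA')).trans ?_
    rw [Finset.card_map, Finset.card_map, hc, abs_sub_comm]
    exact le_abs_self _
  · rw [nsmul_eq_mul, mul_comm, Finset.card_univ]

theorem Phi_lip {K : ℕ} (F : Finset (Fin K) → ℝ)
    (hF : ∀ A A' : Finset (Fin K), A ⊆ A' → |F A - F A'| ≤ (A'.card : ℝ) - A.card)
    (A B : Finset (Fin K)) :
    |Phi F A - Phi F B| ≤ |(A.card : ℝ) - B.card| := by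
  rcases le_total A.card B.card with h | h
  · exact Phi_lip_le F hF A B h
  · rw [abs_sub_comm, abs_sub_comm (A.card : ℝ)]
    exact Phi_lip_le F hF B A h

theorem sum_eq_Phi {K : ℕ} {ι : Type*} [Fintype ι] (F : Finset (Fin K) → ℝ) (u : ι → ℝ)
    (A : ι → Finset (Fin K))
    (hinv : ∀ σ : Equiv.Perm (Fin K), ∑ i, u i * F ((A i).map σ.toEmbedding) = ∑ i, u i * F (A i)) :
    ∑ i, u i * F (A i) = ∑ i, u i * Phi F (A i) := by
  have hN : (0 : ℝ) < (Fintype.card (Equiv.Perm (Fin K)) : ℝ) := by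
    exact_mod_cast Fintype.card_pos
  have : ∑ i, u i * Phi F (A i) = (∑ σ : Equiv.Perm (Fin K), ∑ i, u i * F ((A i).map σ.toEmbedding)) /
      (Fintype.card (Equiv.Perm (Fin K)) : ℝ) := by
    rw [Finset.sum_comm, Finset.sum_div]
    refine Finset.sum_congr rfl fun i _ => ?_
    unfold Phi
    rw [← mul_div_assoc, Finset.mul_sum]
  rw [this]
  simp only [hinv]
  rw [Finset.sum_const, Finset.card_univ, nsmul_eq_mul, mul_div_cancel_left₀ _ hN.ne']

theorem compare {K : ℕ} {ι κ : Type*} [Fintype ι] [Fintype κ] (F : Finset (Fin K) → ℝ)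
    (hF : ∀ A A' : Finset (Fin K), A ⊆ A' → |F A - F A'| ≤ (A'.card : ℝ) - A.card)
    (u : ι → ℝ) (v : κ → ℝ) (A : ι → Finset (Fin K)) (B : κ → Finset (Fin K))
    (hu0 : ∀ i, 0 ≤ u i) (hv0 : ∀ i, 0 ≤ v i) (hu : ∑ i, u i = 1) (hv : ∑ i, v i = 1)
    (hA : ∀ σ : Equiv.Perm (Fin K), ∑ i, u i * F ((A i).map σ.toEmbedding) = ∑ i, u i * F (A i))
    (hB : ∀ σ : Equiv.Perm (Fin K), ∑ i, v i * F ((B i).map σ.toEmbedding) = ∑ i, v i * F (B i))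
    (k : ℝ) :
    |∑ i, u i * F (A i) - ∑ j, v j * F (B j)| ≤
      ∑ i, u i * |((A i).card : ℝ) - k| + ∑ j, v j * |((B j).card : ℝ) - k| := by
  rw [sum_eq_Phi F u A hA, sum_eq_Phi F v B hB]
  have e1 : ∀ f : ι → ℝ, ∑ i, u i * f i = ∑ i, ∑ j, u i * v j * f i := by
    intro f
    refine Finset.sum_congr rfl fun i _ => ?_
    rw [← Finset.sum_mul, ← Finset.mul_sum, hv, mul_one]
  have e2 : ∀ f : κ → ℝ, ∑ j, v j * f j = ∑ i, ∑ j, u i * v j * f j := by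
    intro f
    rw [Finset.sum_comm]
    refine Finset.sum_congr rfl fun j _ => ?_
    rw [← Finset.sum_mul, ← Finset.sum_mul, hu, one_mul]
  rw [e1 (fun i => Phi F (A i)), e2 (fun j => Phi F (B j)), e1 (fun i => |((A i).card : ℝ) - k|),
    e2 (fun j => |((B j).card : ℝ) - k|), ← Finset.sum_sub_distrib, ← Finset.sum_add_distrib]
  refine (Finset.abs_sum_le_sum_abs _ _).trans (Finset.sum_le_sum fun i _ => ?_)
  rw [← Finset.sum_sub_distrib, ← Finset.sum_add_distrib]
  refine (Finset.abs_sum_le_sum_abs _ _).trans (Finset.sum_le_sum fun j _ => ?_)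
  rw [← mul_sub, ← mul_add, abs_mul, abs_of_nonneg (mul_nonneg (hu0 i) (hv0 j))]
  refine mul_le_mul_of_nonneg_left ?_ (mul_nonneg (hu0 i) (hv0 j))
  refine (Phi_lip F hF _ _).trans ?_
  have := abs_sub_le ((A i).card : ℝ) k (B j).card
  rwa [abs_sub_comm k] at this

theorem EE_perm {K : ℕ} (α : ℝ) (F : Finset (Fin K) → ℝ) (σ : Equiv.Perm (Fin K)) :
    ∑ A, wt α A * F (A.map σ.toEmbedding) = ∑ A, wt α A * F A := by
  refine Fintype.sum_equiv σ.finsetCongr _ _ fun A => ?_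
  simp [wt]

theorem EE_var {K : ℕ} (hK : K ≠ 0) {α : ℝ} (h0 : 0 ≤ α) (h1 : α ≤ 1) :
    EE α (fun A : Finset (Fin K) => ((A.card : ℝ) - K * α) ^ 2) = K * α * (1 - α) := by
  have hK' : (K : ℝ) ≠ 0 := by exact_mod_cast hK
  have h := bernstein.variance hK ⟨α, h0, h1⟩
  unfold EE wt
  have h2 := Finset.sum_powerset_apply_card
    (fun k => (α ^ k * (1 - α) ^ (K - k)) * ((k : ℝ) - K * α) ^ 2) (x := (Finset.univ : Finset (Fin K)))
  rw [Finset.powerset_univ] at h2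
  rw [h2]
  simp only [Finset.card_univ, Fintype.card_fin]
  rw [Finset.sum_range]
  have h3 : (K : ℝ) * α * (1 - α) = K ^ 2 * (α * (1 - α) / K) := by field_simp
  simp only at h
  rw [h3, ← h, Finset.mul_sum]
  refine Finset.sum_congr rfl fun k _ => ?_
  rw [bernstein_apply]
  simp only [bernstein.z, nsmul_eq_mul]
  field_simp
  ring

theorem EE_abs {K : ℕ} (hK : K ≠ 0) {α s : ℝ} (h0 : 0 ≤ α) (h1 : α ≤ 1) (hs : 0 < s)
    (hsK : K * α ≤ s ^ 2) :
    EE α (fun A : Finset (Fin K) => |(A.card : ℝ) - K * α|) ≤ s := by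
  have h : ∀ A : Finset (Fin K), |(A.card : ℝ) - K * α| ≤
      (1 / (2 * s)) * ((A.card : ℝ) - K * α) ^ 2 + s / 2 := by
    intro A
    rw [← sq_abs]
    generalize |(A.card : ℝ) - K * α| = t
    rw [← sub_nonneg]
    have : 1 / (2 * s) * t ^ 2 + s / 2 - t = (t - s) ^ 2 / (2 * s) := by field_simp; ring
    rw [this]; positivity
  refine (EE_mono h0 h1 h).trans ?_
  rw [EE_add, EE_const, EE_smul, EE_var hK h0 h1]
  have : (K : ℝ) * α * (1 - α) ≤ s ^ 2 := by
    have : 0 ≤ (K : ℝ) * α := by positivity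
    nlinarith
  calc 1 / (2 * s) * (K * α * (1 - α)) + s / 2 ≤ 1 / (2 * s) * s ^ 2 + s / 2 := by gcongr
    _ = s := by field_simp; ring

/-- average over functions -/
def AV {n K : ℕ} (G : (Fin n → Fin K) → ℝ) : ℝ := ∑ c, (1 / (K : ℝ) ^ n) * G c

theorem AV_mono {n K : ℕ} {F G : (Fin n → Fin K) → ℝ} (h : ∀ c, F c ≤ G c) : AV F ≤ AV G :=
  Finset.sum_le_sum fun c _ => mul_le_mul_of_nonneg_left (h c) (by positivity)

theorem AV_wt {n K : ℕ} (hK : K ≠ 0) : ∑ _c : Fin n → Fin K, (1 / (K : ℝ) ^ n) = 1 := by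
  have : (K : ℝ) ≠ 0 := by exact_mod_cast hK
  simp [this]

theorem AV_const {n K : ℕ} (hK : K ≠ 0) (a : ℝ) : AV (fun _ : Fin n → Fin K => a) = a := by
  unfold AV
  rw [← Finset.sum_mul, AV_wt hK, one_mul]

theorem AV_add {n K : ℕ} (F G : (Fin n → Fin K) → ℝ) :
    AV (fun c => F c + G c) = AV F + AV G := by
  unfold AV; rw [← Finset.sum_add_distrib]; simp only [mul_add]

theorem AV_sub {n K : ℕ} (F G : (Fin n → Fin K) → ℝ) :
    AV (fun c => F c - G c) = AV F - AV G := by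
  unfold AV; rw [← Finset.sum_sub_distrib]; simp only [mul_sub]

theorem AV_abs {n K : ℕ} (F : (Fin n → Fin K) → ℝ) : |AV F| ≤ AV fun c => |F c| := by
  unfold AV
  refine (Finset.abs_sum_le_sum_abs _ _).trans (le_of_eq (Finset.sum_congr rfl fun c _ => ?_))
  rw [abs_mul, abs_of_nonneg (by positivity)]

theorem AV_sum {n K : ℕ} {ι : Type*} (s : Finset ι) (F : ι → (Fin n → Fin K) → ℝ) :
    AV (fun c => ∑ i ∈ s, F i c) = ∑ i ∈ s, AV (F i) := by
  unfold AV; rw [Finset.sum_comm]; simp only [Finset.mul_sum]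

theorem AV_slice {n K : ℕ} (hK : K ≠ 0) (i : Fin n) (G : (Fin n → Fin K) → ℝ) (Mx : ℝ)
    (h : ∀ c, ∑ a, G (Function.update c i a) ≤ Mx) : AV G ≤ Mx / K := by
  have hK' : (0 : ℝ) < K := by exact_mod_cast Nat.pos_of_ne_zero hK
  have e : ∑ c : Fin n → Fin K, ∑ a, G (Function.update c i a) = K * ∑ c, G c := by
    rw [← Fintype.sum_prod_type' (f := fun c a => G (Function.update c i a))]
    have inv : Function.Involutive (fun x : (Fin n → Fin K) × Fin K =>
        (Function.update x.1 i x.2, x.1 i)) := by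
      rintro ⟨c, a⟩; simp
    have he := Fintype.sum_equiv inv.toPerm (fun x => G (Function.update x.1 i x.2))
      (fun x => G x.1) (fun x => rfl)
    rw [he, Fintype.sum_prod_type' (f := fun c _ => G c)]
    simp [Finset.mul_sum]
  rw [le_div_iff₀ hK']
  unfold AV
  rw [← Finset.mul_sum, mul_assoc, mul_comm _ (K : ℝ), ← e, Finset.mul_sum]
  have := AV_mono h
  rw [AV_const hK] at this
  exact this

theorem AV_collide {n K : ℕ} (hK : K ≠ 0) (S : Finset (Fin n)) :
    AV (fun c : Fin n → Fin K => (S.card : ℝ) - (S.image c).card) ≤ (n : ℝ) * n / K := by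
  have h : ∀ c : Fin n → Fin K, (S.card : ℝ) - (S.image c).card ≤
      ∑ i : Fin n, ∑ j : Fin n, if j < i ∧ c i = c j then (1 : ℝ) else 0 := by
    intro c
    have h1 : (S.filter fun i => ¬ ∃ j ∈ S, j < i ∧ c i = c j).card ≤ (S.image c).card := by
      refine Finset.card_le_card_of_injOn c (fun i hi => ?_) (fun i hi j hj hc => ?_)
      · simp at hi; exact Finset.mem_coe.2 (Finset.mem_image_of_mem c hi.1)
      · simp at hi hj
        rcases lt_trichotomy i j with h | h | h
        · exact absurd hc.symm (hj.2 i hi.1 h)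
        · exact h
        · exact absurd hc (hi.2 j hj.1 h)
    have h2 := Finset.card_filter_add_card_filter_not (s := S) (fun i => ∃ j ∈ S, j < i ∧ c i = c j)
    have h3 : ((S.filter fun i => ∃ j ∈ S, j < i ∧ c i = c j).card : ℝ) ≤
        ∑ i : Fin n, ∑ j : Fin n, if j < i ∧ c i = c j then (1 : ℝ) else 0 := by
      rw [Finset.card_filter]
      push_cast
      refine (Finset.sum_le_univ_sum_of_nonneg (fun i => by split_ifs <;> norm_num)).trans ?_
      refine Finset.sum_le_sum fun i _ => ?_
      split_ifs with hh
      · obtain ⟨j, _, hj⟩ := hh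
        have := Finset.single_le_sum (s := Finset.univ)
          (f := fun j => if j < i ∧ c i = c j then (1 : ℝ) else 0)
          (fun j _ => by split_ifs <;> norm_num) (Finset.mem_univ j)
        simpa [hj] using this
      · exact Finset.sum_nonneg fun j _ => by split_ifs <;> norm_num
    have h1' : ((S.filter fun i => ¬ ∃ j ∈ S, j < i ∧ c i = c j).card : ℝ) ≤ (S.image c).card := by
      exact_mod_cast h1
    have h2' : ((S.filter fun i => ∃ j ∈ S, j < i ∧ c i = c j).card : ℝ) +
      (S.filter fun i => ¬ ∃ j ∈ S, j < i ∧ c i = c j).card = S.card := by exact_mod_cast h2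
    linarith
  refine (AV_mono h).trans ?_
  rw [AV_sum]
  have : ∀ i j : Fin n, AV (fun c : Fin n → Fin K => if j < i ∧ c i = c j then (1 : ℝ) else 0) ≤
      1 / K := by
    intro i j
    refine AV_slice hK i _ 1 fun c => ?_
    by_cases hji : j < i
    · simp [hji, Function.update_of_ne hji.ne]
    · simp [hji]
  calc _ ≤ ∑ i : Fin n, ∑ j : Fin n, (1 / K : ℝ) := by
        refine Finset.sum_le_sum fun i _ => ?_
        rw [AV_sum]
        exact Finset.sum_le_sum fun j _ => this i j
    _ = _ := by simp; ring

theorem AV_EE {n K : ℕ} (hK : K ≠ 0) (F : Finset (Fin K) → ℝ)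
    (hF : ∀ A A' : Finset (Fin K), A ⊆ A' → |F A - F A'| ≤ (A'.card : ℝ) - A.card)
    (S : Finset (Fin n)) {α s : ℝ} (h0 : 0 ≤ α) (h1 : α ≤ 1) (hs : 0 < s)
    (hsK : K * α ≤ s ^ 2) (hS : |(S.card : ℝ) - K * α| ≤ 1) :
    |AV (fun c : Fin n → Fin K => F (S.image c)) - EE α F| ≤ 1 + (n : ℝ) * n / K + s := by
  have := compare F hF (fun _ : Fin n → Fin K => (1 / (K : ℝ) ^ n)) (wt α) (fun c => S.image c)
    (fun A => A) (fun _ => by positivity) (wt_nonneg h0 h1) (AV_wt hK)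
    (by have := EE_one (K := K) α; unfold EE at this; simpa using this)
    (by
      intro σ
      refine Fintype.sum_equiv (Equiv.arrowCongr (Equiv.refl _) σ) _ _ fun c => ?_
      congr 2
      ext x
      simp [Equiv.eq_symm_apply])
    (EE_perm α F) (K * α)
  refine this.trans (add_le_add ?_ (EE_abs hK h0 h1 hs hsK))
  have h2 : ∀ c : Fin n → Fin K, |((S.image c).card : ℝ) - K * α| ≤
      1 + ((S.card : ℝ) - (S.image c).card) := by
    intro c
    have : ((S.image c).card : ℝ) ≤ S.card := by exact_mod_cast Finset.card_image_le
    rw [abs_le] at hS ⊢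
    constructor <;> linarith
  have h3 := AV_mono h2
  rw [AV_add, AV_const hK] at h3
  have h4 := AV_collide hK S
  unfold AV at h3 h4
  linarith

theorem lat_lip1 {K w x y : ℕ} (B A A' : Finset (Fin K)) (h : A ⊆ A') :
    |(lat w x y A B : ℝ) - lat w x y A' B| ≤ (A'.card : ℝ) - A.card := by
  have h1 : lat w x y A B ≤ lat w x y A' B :=
    mN_mono fun i j ⟨a, b, c, d⟩ => ⟨a, b, h c, d⟩
  have h2 : lat w x y A' B ≤ lat w x y A B + (A' \ A).card + (∅ : Finset (Fin K)).card := by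
    refine mN_le_add_verts _ _ _ _ fun i j ⟨a, b, c, d⟩ => ?_
    by_cases hi : i ∈ A
    · exact Or.inl ⟨a, b, hi, d⟩
    · exact Or.inr (Or.inl (Finset.mem_sdiff.2 ⟨c, hi⟩))
  have h3 := Finset.card_sdiff_add_card_eq_card h
  have h1' : (lat w x y A B : ℝ) ≤ lat w x y A' B := by exact_mod_cast h1
  have h2' : (lat w x y A' B : ℝ) + A.card ≤ lat w x y A B + A'.card := by
    simp only [Finset.card_empty] at h2
    exact_mod_cast (by omega : lat w x y A' B + A.card ≤ lat w x y A B + A'.card)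
  rw [abs_le]
  constructor <;> linarith

theorem lat_lip2 {K w x y : ℕ} (A B B' : Finset (Fin K)) (h : B ⊆ B') :
    |(lat w x y A B : ℝ) - lat w x y A B'| ≤ (B'.card : ℝ) - B.card := by
  have h1 : lat w x y A B ≤ lat w x y A B' :=
    mN_mono fun i j ⟨a, b, c, d, e⟩ => ⟨a, b, c, h d, e⟩
  have h2 : lat w x y A B' ≤ lat w x y A B + (∅ : Finset (Fin K)).card + (B' \ B).card := by
    refine mN_le_add_verts _ _ _ _ fun i j ⟨a, b, c, d, e⟩ => ?_
    by_cases hi : j ∈ B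
    · exact Or.inl ⟨a, b, c, hi, e⟩
    · exact Or.inr (Or.inr (Finset.mem_sdiff.2 ⟨d, hi⟩))
  have h3 := Finset.card_sdiff_add_card_eq_card h
  have h1' : (lat w x y A B : ℝ) ≤ lat w x y A B' := by exact_mod_cast h1
  have h2' : (lat w x y A B' : ℝ) + B.card ≤ lat w x y A B + B'.card := by
    simp only [Finset.card_empty] at h2
    exact_mod_cast (by omega : lat w x y A B' + B.card ≤ lat w x y A B + B'.card)
  rw [abs_le]
  constructor <;> linarith

theorem EE_abs_le {K : ℕ} {α : ℝ} (h0 : 0 ≤ α) (h1 : α ≤ 1) (F G : Finset (Fin K) → ℝ) (C : ℝ)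
    (h : ∀ A, |F A - G A| ≤ C) : |EE α F - EE α G| ≤ C := by
  have e1 : EE α F ≤ EE α (fun A => G A + C) :=
    EE_mono h0 h1 fun A => by have := (abs_le.1 (h A)).2; linarith
  have e2 : EE α G ≤ EE α (fun A => F A + C) :=
    EE_mono h0 h1 fun A => by have := (abs_le.1 (h A)).1; linarith
  rw [EE_add, EE_const] at e1 e2
  rw [abs_le]
  constructor <;> linarith

theorem AV_UU {n K w : ℕ} (hK : K ≠ 0) (S : Finset (Fin n)) {α β s : ℝ}
    (h0 : 0 ≤ α) (h1 : α ≤ 1) (h0' : 0 ≤ β) (h1' : β ≤ 1) (hs : 0 < s)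
    (hsK : K * α ≤ s ^ 2) (hS : |(S.card : ℝ) - K * α| ≤ 1)
    (hsK' : K * β ≤ s ^ 2) (hS' : |(n : ℝ) - K * β| ≤ 1) :
    |AV (fun c : Fin n → Fin K => AV (fun d : Fin n → Fin K =>
      (lat w 0 0 (S.image c) (Finset.univ.image d) : ℝ))) - UU K w α β 0 0| ≤
      2 * (1 + (n : ℝ) * n / K + s) := by
  have i1 : ∀ c : Fin n → Fin K, |AV (fun d : Fin n → Fin K =>
      (lat w 0 0 (S.image c) (Finset.univ.image d) : ℝ)) -
      EE β (fun B => (lat w 0 0 (S.image c) B : ℝ))| ≤ 1 + (n : ℝ) * n / K + s := fun c =>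
    AV_EE hK (fun B => (lat w 0 0 (S.image c) B : ℝ)) (lat_lip2 _) Finset.univ h0' h1' hs hsK'
      (by simpa using hS')
  have i2 := AV_EE hK (fun A => EE β (fun B => (lat w 0 0 A B : ℝ)))
    (fun A A' h => EE_abs_le h0' h1' _ _ _ fun B => lat_lip1 B A A' h) S h0 h1 hs hsK hS
  have i3 := AV_abs (fun c : Fin n → Fin K => AV (fun d : Fin n → Fin K =>
      (lat w 0 0 (S.image c) (Finset.univ.image d) : ℝ)) -
      EE β (fun B => (lat w 0 0 (S.image c) B : ℝ)))
  have i4 := AV_mono i1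
  rw [AV_const hK] at i4
  have i5 := i3.trans i4
  rw [AV_sub] at i5
  unfold UU
  rw [abs_le] at *
  constructor <;> linarith

theorem exists_sect {n K : ℕ} [Nonempty (Fin n)] (S : Finset (Fin n)) (c : Fin n → Fin K) :
    ∃ f : Fin K → Fin n, ∀ a ∈ S.image c, f a ∈ S ∧ c (f a) = a := by
  have : ∀ a : Fin K, ∃ i : Fin n, a ∈ S.image c → i ∈ S ∧ c i = a := by
    intro a
    by_cases h : a ∈ S.image c
    · obtain ⟨i, hi, e⟩ := Finset.mem_image.1 h
      exact ⟨i, fun _ => ⟨hi, e⟩⟩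
    · exact ⟨Classical.arbitrary _, fun h' => absurd h' h⟩
  choose f hf using this
  exact ⟨f, hf⟩

def cellN {n K : ℕ} (w : ℕ) (S : Finset (Fin n)) (c d : Fin n → Fin K) : ℕ :=
  matchingNumber (fun i j : Fin n => i ∈ S ∧ (c i : ℕ) ≤ d j + w ∧ (d j : ℕ) ≤ c i + w)

theorem cell_lat {n K w : ℕ} [Nonempty (Fin n)] (S : Finset (Fin n)) (c d : Fin n → Fin K) :
    |(cellN w S c d : ℝ) - lat w 0 0 (S.image c) (Finset.univ.image d)| ≤
      ((S.card : ℝ) - (S.image c).card) +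
      (((Finset.univ : Finset (Fin n)).card : ℝ) - (Finset.univ.image d).card) := by
  obtain ⟨f, hf⟩ := exists_sect S c
  obtain ⟨g, hg⟩ := exists_sect Finset.univ d
  have hfi : Set.InjOn f (S.image c : Finset (Fin K)) := by
    intro a ha b hb hab
    rw [← (hf a ha).2, ← (hf b hb).2, hab]
  have hgi : Set.InjOn g (Finset.univ.image d : Finset (Fin K)) := by
    intro a ha b hb hab
    rw [← (hg a ha).2, ← (hg b hb).2, hab]
  have h1 : lat w 0 0 (S.image c) (Finset.univ.image d) ≤ cellN w S c d := by
    refine mN_map _ _ f g ?_ ?_ ?_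
    · rintro i j ⟨_, _, hi, hj, h1, h2⟩
      rw [(hf i hi).2, (hg j hj).2]
      exact ⟨(hf i hi).1, h1, h2⟩
    · rintro i j i' j' ⟨_, _, hi, _⟩ ⟨_, _, hi', _⟩ h
      exact hfi hi hi' h
    · rintro i j i' j' ⟨_, _, _, hi, _⟩ ⟨_, _, _, hi', _⟩ h
      exact hgi hi hi' h
  have hfS : (S.image c).image f ⊆ S := by
    intro i hi
    obtain ⟨a, ha, rfl⟩ := Finset.mem_image.1 hi
    exact (hf a ha).1
  have h2 : cellN w S c d ≤ matchingNumber (fun i j : Fin n => i ∈ (S.image c).image f ∧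
      j ∈ (Finset.univ.image d).image g ∧ (c i : ℕ) ≤ d j + w ∧ (d j : ℕ) ≤ c i + w)
      + (S \ (S.image c).image f).card + (Finset.univ \ (Finset.univ.image d).image g).card := by
    refine mN_le_add_verts _ _ _ _ ?_
    rintro i j ⟨hi, h⟩
    by_cases hi' : i ∈ (S.image c).image f
    · by_cases hj' : j ∈ (Finset.univ.image d).image g
      · exact Or.inl ⟨hi', hj', h⟩
      · exact Or.inr (Or.inr (Finset.mem_sdiff.2 ⟨Finset.mem_univ _, hj'⟩))
    · exact Or.inr (Or.inl (Finset.mem_sdiff.2 ⟨hi, hi'⟩))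
  have h3 : matchingNumber (fun i j : Fin n => i ∈ (S.image c).image f ∧
      j ∈ (Finset.univ.image d).image g ∧ (c i : ℕ) ≤ d j + w ∧ (d j : ℕ) ≤ c i + w) ≤
      lat w 0 0 (S.image c) (Finset.univ.image d) := by
    refine mN_map _ _ c d ?_ ?_ ?_
    · rintro i j ⟨hi, hj, h1, h2⟩
      exact ⟨Nat.zero_le _, Nat.zero_le _, Finset.mem_image_of_mem c (hfS hi),
        Finset.mem_image_of_mem d (Finset.mem_univ _), h1, h2⟩
    · rintro i j i' j' ⟨hi, _⟩ ⟨hi', _⟩ h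
      obtain ⟨a, ha, rfl⟩ := Finset.mem_image.1 hi
      obtain ⟨a', ha', rfl⟩ := Finset.mem_image.1 hi'
      rw [(hf a ha).2, (hf a' ha').2] at h
      rw [h]
    · rintro i j i' j' ⟨_, hi, _⟩ ⟨_, hi', _⟩ h
      obtain ⟨a, ha, rfl⟩ := Finset.mem_image.1 hi
      obtain ⟨a', ha', rfl⟩ := Finset.mem_image.1 hi'
      rw [(hg a ha).2, (hg a' ha').2] at h
      rw [h]
  have h4 := Finset.card_sdiff_add_card_eq_card hfS
  have h5 := Finset.card_sdiff_add_card_eq_card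
    (Finset.subset_univ ((Finset.univ.image d).image g))
  rw [Finset.card_image_of_injOn hfi] at h4
  rw [Finset.card_image_of_injOn hgi] at h5
  have h1' : (lat w 0 0 (S.image c) (Finset.univ.image d) : ℝ) ≤ cellN w S c d := by
    exact_mod_cast h1
  have h2' : (cellN w S c d : ℝ) ≤ lat w 0 0 (S.image c) (Finset.univ.image d) +
      (S \ (S.image c).image f).card + (Finset.univ \ (Finset.univ.image d).image g).card := by
    exact_mod_cast h2.trans (Nat.add_le_add_right (Nat.add_le_add_right h3 _) _)
  have h4' : ((S \ (S.image c).image f).card : ℝ) + (S.image c).card = S.card := by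
    exact_mod_cast h4
  have h5' : ((Finset.univ \ (Finset.univ.image d).image g).card : ℝ) +
      (Finset.univ.image d).card = (Finset.univ : Finset (Fin n)).card := by
    exact_mod_cast h5
  rw [abs_of_nonneg (by linarith)]
  linarith

theorem AV_cell_lat {n K w : ℕ} [Nonempty (Fin n)] (hK : K ≠ 0) (S : Finset (Fin n)) :
    |AV (fun c : Fin n → Fin K => AV (fun d : Fin n → Fin K => (cellN w S c d : ℝ))) -
      AV (fun c : Fin n → Fin K => AV (fun d : Fin n → Fin K =>
      (lat w 0 0 (S.image c) (Finset.univ.image d) : ℝ)))| ≤ 2 * ((n : ℝ) * n / K) := by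
  rw [← AV_sub]
  simp only [← AV_sub]
  refine (AV_abs _).trans ?_
  have h1 : ∀ c : Fin n → Fin K, |AV (fun d : Fin n → Fin K => (cellN w S c d : ℝ) -
      (lat w 0 0 (S.image c) (Finset.univ.image d) : ℝ))| ≤
      ((S.card : ℝ) - (S.image c).card) + (n : ℝ) * n / K := by
    intro c
    refine (AV_abs _).trans ((AV_mono fun d => cell_lat S c d).trans ?_)
    rw [AV_add, AV_const hK]
    have := AV_collide (n := n) hK Finset.univ
    linarith
  refine (AV_mono h1).trans ?_
  rw [AV_add, AV_const hK]
  have := AV_collide (n := n) hK S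
  linarith

def badc {K : ℕ} (w : ℕ) (x y : Fin K) : Prop :=
  (x : ℕ) = y ∨ (x : ℕ) + w = y ∨ (y : ℕ) + w = x ∨ (x : ℕ) + (w + 1) = y ∨ (y : ℕ) + (w + 1) = x

def badN {n K : ℕ} (w : ℕ) (c d : Fin n → Fin K) : ℕ :=
  (Finset.univ.filter fun e : Fin n × Fin n => badc w (c e.1) (d e.2)).card

theorem card_sub_one {K : ℕ} (P : Fin K → Prop) [DecidablePred P] (h : ∀ a b, P a → P b → a = b) :
    (∑ a, if P a then (1 : ℝ) else 0) ≤ 1 := by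
  rw [Finset.sum_boole]
  have : (Finset.univ.filter P).card ≤ 1 := by
    rw [Finset.card_le_one]
    intro a ha b hb
    exact h a b (by simpa using ha) (by simpa using hb)
  exact_mod_cast this

theorem AV_bad {n K w : ℕ} (hK : K ≠ 0) (c : Fin n → Fin K) :
    AV (fun d : Fin n → Fin K => (badN w c d : ℝ)) ≤ 5 * ((n : ℝ) * n / K) := by
  have e : ∀ d : Fin n → Fin K, (badN w c d : ℝ) =
      ∑ e : Fin n × Fin n, if badc w (c e.1) (d e.2) then (1 : ℝ) else 0 := by
    intro d
    unfold badN
    rw [Finset.sum_boole]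
  simp only [e]
  rw [AV_sum]
  have : ∀ e : Fin n × Fin n, AV (fun d : Fin n → Fin K =>
      if badc w (c e.1) (d e.2) then (1 : ℝ) else 0) ≤ 5 / K := by
    intro e
    refine AV_slice hK e.2 _ 5 fun d => ?_
    simp only [Function.update_self]
    generalize c e.1 = x
    have h : ∀ a : Fin K, (if badc w x a then (1 : ℝ) else 0) ≤
        (if (x : ℕ) = a then (1 : ℝ) else 0) + (if (x : ℕ) + w = a then (1 : ℝ) else 0) +
        (if (a : ℕ) + w = x then (1 : ℝ) else 0) + (if (x : ℕ) + (w + 1) = a then (1 : ℝ) else 0) +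
        (if (a : ℕ) + (w + 1) = x then (1 : ℝ) else 0) := by
      intro a
      have n0 : ∀ (P : Prop) [Decidable P], (0 : ℝ) ≤ if P then (1 : ℝ) else 0 := fun P _ => by
        split_ifs <;> norm_num
      have a1 := n0 ((x : ℕ) = a)
      have a2 := n0 ((x : ℕ) + w = a)
      have a3 := n0 ((a : ℕ) + w = x)
      have a4 := n0 ((x : ℕ) + (w + 1) = a)
      have a5 := n0 ((a : ℕ) + (w + 1) = x)
      by_cases hb : badc w x a
      · rw [if_pos hb]
        rcases hb with h | h | h | h | h
        · rw [if_pos h] at a1 ⊢; linarith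
        · rw [if_pos h] at a2 ⊢; linarith
        · rw [if_pos h] at a3 ⊢; linarith
        · rw [if_pos h] at a4 ⊢; linarith
        · rw [if_pos h] at a5 ⊢; linarith
      · rw [if_neg hb]; linarith
    refine (Finset.sum_le_sum fun a _ => h a).trans ?_
    simp only [Finset.sum_add_distrib]
    have b1 := card_sub_one (fun a : Fin K => (x : ℕ) = a) (fun a b h1 h2 => Fin.ext (by omega))
    have b2 := card_sub_one (fun a : Fin K => (x : ℕ) + w = a) (fun a b h1 h2 => Fin.ext (by omega))
    have b3 := card_sub_one (fun a : Fin K => (a : ℕ) + w = x) (fun a b h1 h2 => Fin.ext (by omega))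
    have b4 := card_sub_one (fun a : Fin K => (x : ℕ) + (w + 1) = a)
      (fun a b h1 h2 => Fin.ext (by omega))
    have b5 := card_sub_one (fun a : Fin K => (a : ℕ) + (w + 1) = x)
      (fun a b h1 h2 => Fin.ext (by omega))
    have e5 : (5 : ℝ) = 1 + 1 + 1 + 1 + 1 := by norm_num
    rw [e5]
    exact add_le_add (add_le_add (add_le_add (add_le_add b1 b2) b3) b4) b5
  refine (Finset.sum_le_sum fun e _ => this e).trans (le_of_eq ?_)
  simp
  ring

instance unifI_prob : IsProbabilityMeasure unifI := by
  constructor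
  simp [unifI]

def kap (K : ℕ) (hK : K ≠ 0) (x : ℝ) : Fin K :=
  ⟨min ⌊K * x⌋₊ (K - 1), by omega⟩

theorem kap_meas (K : ℕ) (hK : K ≠ 0) : Measurable (kap K hK) := by
  have h1 : Measurable (fun m : ℕ => (⟨min m (K - 1), by omega⟩ : Fin K)) :=
    measurable_from_nat
  have h2 : Measurable (fun x : ℝ => ⌊(K : ℝ) * x⌋₊) :=
    Nat.measurable_floor.comp (measurable_const.mul measurable_id)
  exact h1.comp h2

theorem kap_le (K : ℕ) (hK : K ≠ 0) (x : ℝ) (hx : x ∈ Set.Icc (0 : ℝ) 1) :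
    ((kap K hK x : ℕ) : ℝ) ≤ K * x ∧ K * x ≤ (kap K hK x : ℕ) + 1 := by
  have hx0 : 0 ≤ (K : ℝ) * x := mul_nonneg (Nat.cast_nonneg _) hx.1
  have h1 := Nat.floor_le hx0
  have h2 := Nat.lt_floor_add_one ((K : ℝ) * x)
  have h3 : (K : ℝ) * x ≤ K := by
    have := hx.2
    have : (0 : ℝ) ≤ K := Nat.cast_nonneg _
    nlinarith
  unfold kap
  constructor
  · refine le_trans ?_ h1
    exact_mod_cast min_le_left _ _
  · rcases le_total ⌊(K : ℝ) * x⌋₊ (K - 1) with h | h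
    · simp only [min_eq_left h]; exact h2.le
    · simp only [min_eq_right h]
      refine h3.trans ?_
      have : K ≤ (K - 1) + 1 := by omega
      exact_mod_cast this

theorem kap_eq (K : ℕ) (hK : K ≠ 0) (x : ℝ) (k : Fin K) (h1 : ((k : ℕ) : ℝ) ≤ K * x)
    (h2 : K * x < (k : ℕ) + 1) : kap K hK x = k := by
  have hx0 : 0 ≤ (K : ℝ) * x := (Nat.cast_nonneg _).trans h1
  have : ⌊(K : ℝ) * x⌋₊ = k := (Nat.floor_eq_iff hx0).2 ⟨h1, h2⟩
  unfold kap
  apply Fin.ext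
  simp only [this]
  have := k.2
  omega

theorem kap_mass (K : ℕ) (hK : K ≠ 0) (k : Fin K) :
    unifI.real (kap K hK ⁻¹' {k}) = 1 / K := by
  have hKp : (0 : ℝ) < K := by exact_mod_cast Nat.pos_of_ne_zero hK
  have hk1 : ((k : ℕ) : ℝ) + 1 ≤ K := by exact_mod_cast k.2
  have hk0 : (0 : ℝ) ≤ (k : ℕ) := Nat.cast_nonneg _
  have hm : MeasurableSet (kap K hK ⁻¹' {k}) := kap_meas K hK (MeasurableSet.singleton k)
  have e : unifI.real (kap K hK ⁻¹' {k}) =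
      volume.real ((kap K hK ⁻¹' {k}) ∩ Set.Icc (0 : ℝ) 1) := by
    unfold unifI
    rw [measureReal_restrict_apply hm]
  rw [e]
  have len : ((k : ℕ) + 1 : ℝ) / K - (k : ℕ) / K = 1 / K := by field_simp; ring
  have lep : (0 : ℝ) ≤ 1 / K := by positivity
  apply le_antisymm
  · have hs : (kap K hK ⁻¹' {k}) ∩ Set.Icc (0 : ℝ) 1 ⊆
        Set.Icc (((k : ℕ) : ℝ) / K) (((k : ℕ) + 1 : ℝ) / K) := by
      rintro x ⟨hx, hx1⟩
      have := kap_le K hK x hx1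
      have hx' : kap K hK x = k := hx
      rw [hx'] at this
      constructor
      · rw [div_le_iff₀ hKp]; linarith [this.1]
      · rw [le_div_iff₀ hKp]; linarith [this.2]
    have := measureReal_mono (μ := volume) hs (by simp)
    refine this.trans (le_of_eq ?_)
    rw [Real.volume_real_Icc, len, max_eq_left lep]
  · have hs : Set.Ico (((k : ℕ) : ℝ) / K) (((k : ℕ) + 1 : ℝ) / K) ⊆
        (kap K hK ⁻¹' {k}) ∩ Set.Icc (0 : ℝ) 1 := by
      rintro x ⟨hx, hx1⟩
      have h1 := hx
      have h2 := hx1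
      rw [div_le_iff₀ hKp] at h1
      rw [lt_div_iff₀ hKp] at h2
      refine ⟨kap_eq K hK x k (by linarith) (by linarith), ?_, ?_⟩
      · exact le_trans (by positivity) hx
      · refine hx1.le.trans ?_
        rw [div_le_one hKp]; exact hk1
    have := measureReal_mono (μ := volume) hs
      (ne_top_of_le_ne_top (by simp) (measure_mono (Set.inter_subset_right (t := Set.Icc (0:ℝ) 1))))
    refine le_trans (le_of_eq ?_) this
    rw [Real.volume_real_Ico, len, max_eq_left lep]

def Mu (n : ℕ) : Measure (Fin n → ℝ) := Measure.pi fun _ => unifI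

instance Mu_prob (n : ℕ) : IsProbabilityMeasure (Mu n) := by unfold Mu; infer_instance

theorem kapv_meas (n K : ℕ) (hK : K ≠ 0) :
    Measurable (fun (S : Fin n → ℝ) (i : Fin n) => kap K hK (S i)) :=
  measurable_pi_lambda _ fun i => (kap_meas K hK).comp (measurable_pi_apply i)

theorem int_AV {n K : ℕ} (hK : K ≠ 0) (G : (Fin n → Fin K) → ℝ) :
    ∫ S, G (fun i => kap K hK (S i)) ∂(Mu n) = AV G := by
  have hm := kapv_meas n K hK
  have := integral_map (μ := Mu n) hm.aemeasurable (f := G)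
    (Measurable.of_discrete.aestronglyMeasurable)
  rw [← this]
  haveI : IsProbabilityMeasure ((Mu n).map (fun (S : Fin n → ℝ) (i : Fin n) => kap K hK (S i))) :=
    Measure.isProbabilityMeasure_map hm.aemeasurable
  rw [integral_fintype (Integrable.of_finite)]
  unfold AV
  refine Finset.sum_congr rfl fun c _ => ?_
  rw [map_measureReal_apply hm (MeasurableSet.singleton c), smul_eq_mul]
  congr 1
  have : (fun (S : Fin n → ℝ) (i : Fin n) => kap K hK (S i)) ⁻¹' {c} =
      Set.pi Set.univ (fun i => kap K hK ⁻¹' {c i}) := by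
    ext S
    simp [funext_iff]
  rw [this, measureReal_def, Mu, Measure.pi_pi, ENNReal.toReal_prod]
  have h2 : ∀ i, (unifI (kap K hK ⁻¹' {c i})).toReal = 1 / K := fun i => kap_mass K hK (c i)
  simp [h2]

def realN (n : ℕ) (b p : ℝ) (S D : Fin n → ℝ) : ℝ :=
  (matchingNumber (fun i j : Fin n =>
        |S i - D j| ≤ (if (i : ℕ) < Nat.floor (p * n) then 0 + b else 0) / (n : ℝ)) : ℝ)

theorem realN_meas (n : ℕ) (b p : ℝ) :
    Measurable (fun z : (Fin n → ℝ) × (Fin n → ℝ) => realN n b p z.1 z.2) := by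
  have h1 : Measurable (fun A : Fin n → Fin n → Prop => (matchingNumber A : ℝ)) :=
    Measurable.of_discrete
  have h2 : Measurable (fun (z : (Fin n → ℝ) × (Fin n → ℝ)) (i j : Fin n) =>
      |z.1 i - z.2 j| ≤ (if (i : ℕ) < Nat.floor (p * n) then 0 + b else 0) / (n : ℝ)) := by
    refine measurable_pi_lambda _ fun i => measurable_pi_lambda _ fun j => ?_
    refine measurableSet_setOfPred.1 (measurableSet_le ?_ measurable_const)
    fun_prop
  exact h1.comp h2

theorem nu_close {n K : ℕ} (hK : K ≠ 0) (b p : ℝ)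
    (C B : (Fin n → Fin K) → (Fin n → Fin K) → ℝ)
    (h : ∀ S D : Fin n → ℝ, (∀ i, S i ∈ Set.Icc (0 : ℝ) 1) → (∀ i, D i ∈ Set.Icc (0 : ℝ) 1) →
      |realN n b p S D - C (fun i => kap K hK (S i)) (fun i => kap K hK (D i))| ≤
        B (fun i => kap K hK (S i)) (fun i => kap K hK (D i))) :
    |nuDual n 0 b p - AV (fun c => AV (fun d => C c d))| ≤ AV (fun c => AV (fun d => B c d)) := by
  have dm : ∀ C : (Fin n → Fin K) → (Fin n → Fin K) → ℝ,
      Measurable (fun z : (Fin n → ℝ) × (Fin n → ℝ) =>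
        C (fun i => kap K hK (z.1 i)) (fun i => kap K hK (z.2 i))) := by
    intro C
    have h1 : Measurable (fun q : (Fin n → Fin K) × (Fin n → Fin K) => C q.1 q.2) :=
      Measurable.of_discrete
    exact h1.comp (((kapv_meas n K hK).comp measurable_fst).prodMk
      ((kapv_meas n K hK).comp measurable_snd))
  have di : ∀ C : (Fin n → Fin K) → (Fin n → Fin K) → ℝ,
      Integrable (fun z : (Fin n → ℝ) × (Fin n → ℝ) =>
        C (fun i => kap K hK (z.1 i)) (fun i => kap K hK (z.2 i))) ((Mu n).prod (Mu n)) := by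
    intro C
    refine Integrable.of_bound (dm C).aestronglyMeasurable (∑ c, ∑ d, |C c d|)
      (Filter.Eventually.of_forall fun z => ?_)
    rw [Real.norm_eq_abs]
    refine le_trans ?_ (Finset.single_le_sum (f := fun c => ∑ d, |C c d|)
      (fun c _ => Finset.sum_nonneg fun d _ => abs_nonneg _)
      (Finset.mem_univ (fun i => kap K hK (z.1 i))))
    exact Finset.single_le_sum (f := fun d => |C (fun i => kap K hK (z.1 i)) d|)
      (fun d _ => abs_nonneg _) (Finset.mem_univ (fun i => kap K hK (z.2 i)))
  have dv : ∀ C : (Fin n → Fin K) → (Fin n → Fin K) → ℝ,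
      ∫ z : (Fin n → ℝ) × (Fin n → ℝ), C (fun i => kap K hK (z.1 i)) (fun i => kap K hK (z.2 i))
        ∂((Mu n).prod (Mu n)) = AV (fun c => AV (fun d => C c d)) := by
    intro C
    rw [integral_prod _ (di C)]
    simp only
    rw [← int_AV hK]
    refine integral_congr_ae (Filter.Eventually.of_forall fun S => ?_)
    simp only
    rw [← int_AV hK]
  have ri : Integrable (fun z : (Fin n → ℝ) × (Fin n → ℝ) => realN n b p z.1 z.2)
      ((Mu n).prod (Mu n)) := by
    refine Integrable.of_bound (realN_meas n b p).aestronglyMeasurable (n : ℝ)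
      (Filter.Eventually.of_forall fun z => ?_)
    rw [Real.norm_eq_abs, realN, abs_of_nonneg (Nat.cast_nonneg _)]
    exact_mod_cast mN_le_card _
  have rv : nuDual n 0 b p = ∫ z : (Fin n → ℝ) × (Fin n → ℝ), realN n b p z.1 z.2
      ∂((Mu n).prod (Mu n)) := by
    rw [integral_prod _ ri]
    rfl
  have ae1 : ∀ᵐ S ∂(Mu n), ∀ i, S i ∈ Set.Icc (0 : ℝ) 1 := by
    rw [ae_all_iff]
    intro i
    have h0 : ∀ᵐ x ∂unifI, x ∈ Set.Icc (0 : ℝ) 1 := ae_restrict_mem measurableSet_Icc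
    exact (Measure.tendsto_eval_ae_ae (μ := fun _ : Fin n => unifI) (i := i)).eventually h0
  have ae2 : ∀ᵐ z ∂((Mu n).prod (Mu n)), (∀ i, z.1 i ∈ Set.Icc (0 : ℝ) 1) ∧
      ∀ i, z.2 i ∈ Set.Icc (0 : ℝ) 1 :=
    (Measure.quasiMeasurePreserving_fst.ae ae1).and (Measure.quasiMeasurePreserving_snd.ae ae1)
  rw [rv, ← dv C, ← dv B, ← integral_sub ri (di C), ← Real.norm_eq_abs]
  refine norm_integral_le_of_norm_le (di B) ?_
  filter_upwards [ae2] with z hz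
  exact h z.1 z.2 hz.1 hz.2

theorem near_aux {x y t w : ℕ} {X Y T : ℝ} (hx : (x : ℝ) ≤ X) (hx' : X ≤ x + 1)
    (hy : (y : ℝ) ≤ Y) (hy' : Y ≤ y + 1) (hw : (w : ℝ) ≤ T) (hw' : T < w + 1) :
    (|X - Y| ≤ T → ((x ≤ y + w ∧ y ≤ x + w) ∨ x + (w + 1) = y ∨ y + (w + 1) = x)) ∧
    ((x ≤ y + w ∧ y ≤ x + w) → (|X - Y| ≤ T ∨ x + w = y ∨ y + w = x)) := by
  constructor
  · intro h
    rw [abs_le] at h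
    have h1 : x < y + (w + 2) := by
      have : (x : ℝ) < ((y + (w + 2) : ℕ) : ℝ) := by push_cast; linarith
      exact_mod_cast this
    have h2 : y < x + (w + 2) := by
      have : (y : ℝ) < ((x + (w + 2) : ℕ) : ℝ) := by push_cast; linarith
      exact_mod_cast this
    omega
  · rintro ⟨h1, h2⟩
    by_contra hc
    push Not at hc
    obtain ⟨h3, h4, h5⟩ := hc
    rw [lt_abs] at h3
    rcases h3 with h3 | h3
    · have : y + w < x + 1 := by
        have : ((y + w : ℕ) : ℝ) < ((x + 1 : ℕ) : ℝ) := by push_cast; linarith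
        exact_mod_cast this
      omega
    · have : x + w < y + 1 := by
        have : ((x + w : ℕ) : ℝ) < ((y + 1 : ℕ) : ℝ) := by push_cast; linarith
        exact_mod_cast this
      omega

def SS (n : ℕ) (p : ℝ) : Finset (Fin n) := Finset.univ.filter fun i => (i : ℕ) < ⌊p * n⌋₊

theorem real_cell {n : ℕ} (hn : n ≠ 0) (hK : n * n ≠ 0) {b : ℝ} (hb : 0 < b) (p : ℝ)
    (S D : Fin n → ℝ) (hS : ∀ i, S i ∈ Set.Icc (0 : ℝ) 1) (hD : ∀ i, D i ∈ Set.Icc (0 : ℝ) 1) :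
    |realN n b p S D - (cellN ⌊b * n⌋₊ (SS n p) (fun i => kap (n * n) hK (S i))
        (fun i => kap (n * n) hK (D i)) : ℝ)| ≤
      (badN ⌊b * n⌋₊ (fun i => kap (n * n) hK (S i)) (fun i => kap (n * n) hK (D i)) : ℝ) := by
  have hnp : (0 : ℝ) < n := by exact_mod_cast Nat.pos_of_ne_zero hn
  set w := ⌊b * n⌋₊ with hw
  have hw1 : (w : ℝ) ≤ b * n := Nat.floor_le (by positivity)
  have hw2 : b * n < w + 1 := Nat.lt_floor_add_one _
  have key := fun i j => near_aux (t := 0) (kap_le _ hK _ (hS i)).1 (kap_le _ hK _ (hS i)).2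
    (kap_le _ hK _ (hD j)).1 (kap_le _ hK _ (hD j)).2 hw1 hw2
  have sc : ∀ i j, |((n * n : ℕ) : ℝ) * S i - ((n * n : ℕ) : ℝ) * D j| ≤ b * n ↔
      |S i - D j| ≤ (0 + b) / n := by
    intro i j
    rw [← mul_sub, abs_mul, abs_of_nonneg (Nat.cast_nonneg _), le_div_iff₀ hnp]
    push_cast
    constructor
    · intro h
      refine le_of_mul_le_mul_right ?_ hnp
      linarith
    · intro h
      have := mul_le_mul_of_nonneg_right h hnp.le
      linarith
  simp only [sc] at key
  set c := (fun i => kap (n * n) hK (S i)) with hc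
  set d := (fun i => kap (n * n) hK (D i)) with hd
  set T := (Finset.univ.filter fun e : Fin n × Fin n => badc w (c e.1) (d e.2)) with hT
  have memT : ∀ i j, (i, j) ∈ T ↔ badc w (c i) (d j) := by
    intro i j
    simp [hT]
  have h1 := mN_le_add_edges (fun i j : Fin n =>
        |S i - D j| ≤ (if (i : ℕ) < Nat.floor (p * n) then 0 + b else 0) / (n : ℝ))
        (fun i j : Fin n => i ∈ SS n p ∧ (c i : ℕ) ≤ d j + w ∧ (d j : ℕ) ≤ c i + w) T (by
    intro i j h
    rw [memT]
    by_cases hi : (i : ℕ) < ⌊p * n⌋₊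
    · rw [if_pos hi] at h
      rcases (key i j).1 h with h | h | h
      · exact Or.inl ⟨by simp [SS, hi], h⟩
      · exact Or.inr (Or.inr (Or.inr (Or.inr (Or.inl h))))
      · exact Or.inr (Or.inr (Or.inr (Or.inr (Or.inr h))))
    · rw [if_neg hi, zero_div] at h
      have : S i = D j := by
        have := abs_nonpos_iff.1 h
        linarith
      right; left
      simp only [hc, hd, this])
  have h2 := mN_le_add_edges 
        (fun i j : Fin n => i ∈ SS n p ∧ (c i : ℕ) ≤ d j + w ∧ (d j : ℕ) ≤ c i + w)
        (fun i j : Fin n =>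
        |S i - D j| ≤ (if (i : ℕ) < Nat.floor (p * n) then 0 + b else 0) / (n : ℝ)) T (by
    rintro i j ⟨hi, h⟩
    rw [memT]
    have hi : (i : ℕ) < ⌊p * n⌋₊ := by simpa [SS] using hi
    rw [if_pos hi]
    rcases (key i j).2 h with h | h | h
    · exact Or.inl h
    · exact Or.inr (Or.inr (Or.inl h))
    · exact Or.inr (Or.inr (Or.inr (Or.inl h))))
  have e1 : T.card = badN w c d := rfl
  rw [e1] at h1 h2
  unfold realN
  rw [abs_le]
  have h1' := (Nat.cast_le (α := ℝ)).2 h1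
  have h2' := (Nat.cast_le (α := ℝ)).2 h2
  push_cast at h1' h2'
  unfold cellN
  constructor <;> linarith

theorem SS_card {n : ℕ} {p : ℝ} (hp0 : 0 < p) (hp1 : p < 1) :
    |((SS n p).card : ℝ) - p * n| ≤ 1 := by
  have hnp : (0 : ℝ) ≤ n := Nat.cast_nonneg _
  have hf : ⌊p * n⌋₊ ≤ n := Nat.floor_le_of_le (by nlinarith)
  have e : (SS n p).card = ⌊p * n⌋₊ := by
    unfold SS
    rw [Fin.card_filter_val_lt]
    exact min_eq_right hf
  rw [e, abs_le]
  have h1 := Nat.floor_le (show 0 ≤ p * n by positivity)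
  have h2 := Nat.lt_floor_add_one (p * n)
  constructor <;> linarith

theorem nu_bound {n : ℕ} (hn : 2 ≤ n) {b p : ℝ} (hb : 0 < b) (hp0 : 0 < p) (hp1 : p < 1) :
    |nuDual n 0 b p - n * (p * (1 - ((1 - 1 / (n : ℝ)) / (1 - p / n)) ^ (2 * ⌊b * n⌋₊ + 1)) /
      (1 - p * ((1 - 1 / (n : ℝ)) / (1 - p / n)) ^ (2 * ⌊b * n⌋₊ + 1)))| ≤
      14 + (6 * b + 12) / (1 - p) ^ 2 + 2 * Real.sqrt n := by
  have hn0 : n ≠ 0 := by omega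
  have hK : n * n ≠ 0 := by positivity
  haveI : Nonempty (Fin n) := ⟨⟨0, by omega⟩⟩
  have hnp : (0 : ℝ) < n := by exact_mod_cast Nat.pos_of_ne_zero hn0
  have hn2 : (2 : ℝ) ≤ n := by exact_mod_cast hn
  have hq : (n : ℝ) * n / (n * n : ℕ) = 1 := by push_cast; field_simp
  have s1 := nu_close hK b p (fun c d => (cellN ⌊b * n⌋₊ (SS n p) c d : ℝ))
    (fun c d => (badN ⌊b * n⌋₊ c d : ℝ)) (fun S D hS hD => real_cell hn0 hK hb p S D hS hD)
  have s1' : AV (fun c : Fin n → Fin (n * n) => AV (fun d : Fin n → Fin (n * n) =>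
      (badN ⌊b * n⌋₊ c d : ℝ))) ≤ 5 := by
    refine (AV_mono (fun c => AV_bad hK c)).trans ?_
    rw [AV_const hK, hq]
    norm_num
  have s2 := AV_cell_lat (w := ⌊b * n⌋₊) hK (SS n p)
  have sq : Real.sqrt n ^ 2 = n := Real.sq_sqrt hnp.le
  have ea : ((n * n : ℕ) : ℝ) * (p / n) = p * n := by push_cast; field_simp
  have eb : ((n * n : ℕ) : ℝ) * (1 / n) = n := by push_cast; field_simp
  have s3 := AV_UU (w := ⌊b * n⌋₊) hK (SS n p) (α := p / n) (β := 1 / n) (s := Real.sqrt n)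
    (by positivity) (by rw [div_le_one hnp]; linarith) (by positivity)
    (by rw [div_le_one hnp]; linarith) (Real.sqrt_pos.2 hnp)
    (by rw [ea, sq]; nlinarith) (by rw [ea]; exact SS_card hp0 hp1)
    (by rw [eb, sq]) (by rw [eb]; simp)
  have s4 := lattice_value hn hb hp0 hp1 _ rfl
  rw [hq] at s2 s3
  have s1 := s1.trans s1'
  rw [abs_le] at *
  constructor <;> linarith

theorem R_lim {b p : ℝ} (hb : 0 < b) (hp0 : 0 < p) (hp1 : p < 1) :
    Filter.Tendsto (fun n : ℕ => ((1 - 1 / (n : ℝ)) / (1 - p / n)) ^ (2 * ⌊b * n⌋₊ + 1))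
      Filter.atTop (nhds (Real.exp ((p - 1) * (2 * b)))) := by
  have inv0 : Filter.Tendsto (fun n : ℕ => 1 / (n : ℝ)) Filter.atTop (nhds 0) :=
    tendsto_one_div_atTop_nhds_zero_nat
  have h1 : Filter.Tendsto (fun n : ℕ => (n : ℝ) * ((1 - 1 / (n : ℝ)) / (1 - p / n) - 1))
      Filter.atTop (nhds (p - 1)) := by
    have : Filter.Tendsto (fun n : ℕ => (p - 1) / (1 - p * (1 / (n : ℝ))))
        Filter.atTop (nhds ((p - 1) / (1 - p * 0))) :=
      tendsto_const_nhds.div (tendsto_const_nhds.sub (tendsto_const_nhds.mul inv0)) (by norm_num)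
    have e : (p - 1) / (1 - p * 0) = p - 1 := by simp
    rw [e] at this
    refine this.congr' ?_
    filter_upwards [Filter.eventually_ge_atTop 2] with n hn
    have hn2 : (2 : ℝ) ≤ n := by exact_mod_cast hn
    have h0 : (n : ℝ) ≠ 0 := by linarith
    have h3 : (n : ℝ) - p ≠ 0 := by
      have : 0 < (n : ℝ) - p := by linarith
      exact this.ne'
    have h4 : 1 - p / n = ((n : ℝ) - p) / n := by field_simp
    have h5 : 1 - p * (1 / n) = ((n : ℝ) - p) / n := by field_simp
    rw [h4, h5]
    field_simp
    ring
  have h2 := Real.tendsto_one_add_pow_exp_of_tendsto h1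
  have h3 : Filter.Tendsto (fun n : ℕ => ((2 * ⌊b * n⌋₊ + 1 : ℕ) : ℝ) / n)
      Filter.atTop (nhds (2 * b)) := by
    have f1 := (tendsto_nat_floor_mul_div_atTop hb.le).comp
      (tendsto_natCast_atTop_atTop (R := ℝ))
    have f2 := (f1.const_mul 2).add inv0
    rw [add_zero] at f2
    refine f2.congr fun n => ?_
    simp only [Function.comp]
    push_cast
    ring
  have h4 := h2.rpow h3 (Or.inl (Real.exp_pos _).ne')
  rw [← Real.exp_mul] at h4
  refine h4.congr' ?_
  filter_upwards [Filter.eventually_ge_atTop 2] with n hn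
  have hn2 : (2 : ℝ) ≤ n := by exact_mod_cast hn
  have hnp : (0 : ℝ) < n := by linarith
  have hq : 0 ≤ (1 - 1 / (n : ℝ)) / (1 - p / n) := by
    apply div_nonneg
    · have : 1 / (n : ℝ) ≤ 1 := by rw [div_le_one hnp]; linarith
      linarith
    · have : p / (n : ℝ) ≤ 1 := by rw [div_le_one hnp]; linarith
      linarith
  rw [add_sub_cancel, ← Real.rpow_natCast, ← Real.rpow_mul hq, ← Real.rpow_natCast]
  congr 1
  field_simp

theorem main_lim {b p : ℝ} (hb : 0 < b) (hp0 : 0 < p) (hp1 : p < 1) :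
    Filter.Tendsto (fun n : ℕ => nuDual n 0 b p / n) Filter.atTop
      (nhds ((Real.exp (2 * p * b) - Real.exp (2 * b)) /
        (Real.exp (2 * p * b) - (1 / p) * Real.exp (2 * b)))) := by
  have hR := R_lim hb hp0 hp1
  set L := Real.exp ((p - 1) * (2 * b)) with hL
  have hL1 : L ≤ 1 := by
    rw [hL, Real.exp_le_one_iff]
    nlinarith
  have hLp : 0 < L := Real.exp_pos _
  have hd : 1 - p * L ≠ 0 := by
    have : 0 < 1 - p * L := by nlinarith
    exact this.ne'
  have eL : Real.exp (2 * p * b) = L * Real.exp (2 * b) := by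
    rw [hL, ← Real.exp_add]; congr 1; ring
  have hE : Real.exp (2 * b) ≠ 0 := (Real.exp_pos _).ne'
  have eT : (Real.exp (2 * p * b) - Real.exp (2 * b)) /
        (Real.exp (2 * p * b) - (1 / p) * Real.exp (2 * b)) = p * (1 - L) / (1 - p * L) := by
    rw [eL]
    have : L * Real.exp (2 * b) - 1 / p * Real.exp (2 * b) =
        -((1 - p * L) * Real.exp (2 * b) / p) := by field_simp; ring
    rw [this]
    field_simp
    ring
  rw [eT]
  have hV := ((tendsto_const_nhds (x := p)).mul ((tendsto_const_nhds (x := (1 : ℝ))).sub hR)).div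
    ((tendsto_const_nhds (x := (1 : ℝ))).sub ((tendsto_const_nhds (x := p)).mul hR)) hd
  set C := 14 + (6 * b + 12) / (1 - p) ^ 2 with hC
  have inv0 : Filter.Tendsto (fun n : ℕ => 1 / (n : ℝ)) Filter.atTop (nhds 0) :=
    tendsto_one_div_atTop_nhds_zero_nat
  have hs : Filter.Tendsto (fun n : ℕ => C * (1 / (n : ℝ)) + 2 * Real.sqrt (1 / (n : ℝ)))
      Filter.atTop (nhds 0) := by
    have h1 := (Real.continuous_sqrt.tendsto 0).comp inv0
    rw [Real.sqrt_zero] at h1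
    have h2 := (inv0.const_mul C).add (h1.const_mul 2)
    simpa using h2
  refine tendsto_of_tendsto_of_dist hV ?_
  refine squeeze_zero' (Filter.Eventually.of_forall fun n => dist_nonneg) ?_ hs
  filter_upwards [Filter.eventually_ge_atTop 2] with n hn
  have hn2 : (2 : ℝ) ≤ n := by exact_mod_cast hn
  have hnp : (0 : ℝ) < n := by linarith
  have hb := nu_bound hn hb hp0 hp1
  rw [dist_comm, Real.dist_eq]
  have e1 : Real.sqrt (1 / (n : ℝ)) = Real.sqrt n / n := by
    rw [Real.sqrt_div zero_le_one, Real.sqrt_one, Real.sqrt_div_self', ]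
  rw [e1]
  simp only [Pi.div_apply]
  generalize p * (1 - ((1 - 1 / (n : ℝ)) / (1 - p / n)) ^ (2 * ⌊b * n⌋₊ + 1)) /
      (1 - p * ((1 - 1 / (n : ℝ)) / (1 - p / n)) ^ (2 * ⌊b * n⌋₊ + 1)) = V at *
  have e2 : nuDual n 0 b p / n - V = (nuDual n 0 b p - n * V) / n := by field_simp
  rw [e2, abs_div, abs_of_pos hnp, div_le_iff₀ hnp]
  refine hb.trans (le_of_eq ?_)
  have : (C : ℝ) = 14 + (6 * b + 12) / (1 - p) ^ 2 := hC
  rw [← this]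
  field_simp

/-- **Exact matching rate in the dual service-range model with zero base range.**
Fix `b > 0` and `p ∈ (0,1)`. Then
`lim_{n→∞} ν_n(0, b, p)/n = (e^{2pb} - e^{2b}) / (e^{2pb} - (1/p) e^{2b})`. -/
theorem dual_service_range_zero_base (b p : ℝ) (hb : 0 < b) (hp : p ∈ Set.Ioo (0 : ℝ) 1) :
    Filter.Tendsto (fun n : ℕ => nuDual n 0 b p / n) Filter.atTop
      (nhds ((Real.exp (2 * p * b) - Real.exp (2 * b)) /
        (Real.exp (2 * p * b) - (1 / p) * Real.exp (2 * b)))) := by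
  exact main_lim hb hp.1 hp.2

end
end

section
/- Optimality of the deadline-greedy matching on interval bigraphs: Let s_1, …, s_n ∈ ℝ be supply positions with service ranges r_1, …, r_n ≥ 0, and let d_1, …, d_n ∈ ℝ be demand positions; form the bipartite graph G in which supply i is joined to demand j iff |s_i − d_j| ≤ r_i/n. Consider the greedy algorithm that processes the demand nodes in non-decreasing order of position and, whenever the current demand node has at least one currently unmatched neighbor, matches it to an unmatched neighbor i minimizing the deadline s_i + r_i/n (ties broken arbitrarily). Then the matching output by this greedy algorithm is a maximum-cardinality matching of G. -/
open scoped Classical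

noncomputable section

def GValid {n : ℕ} (A : Fin n → Fin n → Prop) (f : Fin n → Option (Fin n)) : Prop :=
  (∀ t i, f t = some i → A i t) ∧ ∀ t t' i, f t = some i → f t' = some i → t = t'

lemma greedy_exchange {n : ℕ} (A : Fin n → Fin n → Prop) (D : Fin n → ℝ)
    (hA : ∀ i i' k t, k ≤ t → A i t → A i' k → D i ≤ D i' → A i' t)
    (m : Fin n → Option (Fin n))
    (h0 : ∀ t, m t = none → ∀ i, (∀ t', t' < t → m t' ≠ some i) → ¬ A i t)
    (h1 : ∀ t i, m t = some i → (∀ t', t' < t → m t' ≠ some i) ∧ A i t ∧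
      ∀ i', (∀ t', t' < t → m t' ≠ some i') → A i' t → D i ≤ D i')
    (f : Fin n → Option (Fin n)) (hf : GValid A f) (k : ℕ) :
    ∃ g, GValid A g ∧ (∀ t : Fin n, t.val < k → g t = m t) ∧
      (Finset.univ.filter fun t => f t ≠ none).card ≤
        (Finset.univ.filter fun t => g t ≠ none).card := by
  induction k with
  | zero => exact ⟨f, hf, by simp, le_rfl⟩
  | succ k ih =>
    obtain ⟨g, hg, hag, hc⟩ := ih
    by_cases hk : k < n
    swap
    · exact ⟨g, hg, fun t _ => hag t (by omega), hc⟩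
    obtain ⟨K, hK⟩ : ∃ K : Fin n, K.val = k := ⟨⟨k, hk⟩, rfl⟩
    have hag' : ∀ t, t < K → g t = m t := fun t ht => hag t (by
      have : t.val < K.val := ht
      omega)
    have fin : ∀ g' : Fin n → Option (Fin n), (∀ t, t < K → g' t = g t) → g' K = m K →
        ∀ t : Fin n, t.val < k + 1 → g' t = m t := by
      intro g' ha hb t ht
      rcases lt_or_eq_of_le (Nat.lt_succ_iff.mp ht) with h | h
      · rw [ha t (by show t.val < K.val; omega), hag t h]
      · have : t = K := Fin.ext (by omega)
        rw [this, hb]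
    have fresh : ∀ i, g K = some i → ∀ t', t' < K → m t' ≠ some i := by
      intro i hi t' ht' h
      rw [← hag' t' ht'] at h
      exact absurd (hg.2 _ _ _ h hi) ht'.ne
    cases hm : m K with
    | none =>
      refine ⟨g, hg, fin g (fun _ _ => rfl) ?_, hc⟩
      rw [hm]
      cases hgK : g K with
      | none => rfl
      | some i => exact absurd (hg.1 _ _ hgK) (h0 K hm i (fresh i hgK))
    | some i =>
      obtain ⟨hi1, hi2, hi3⟩ := h1 K i hm
      have hi1g : ∀ t', g t' = some i → K ≤ t' := by
        intro t' h
        by_contra hlt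
        exact hi1 t' (not_le.mp hlt) ((hag' t' (not_le.mp hlt)) ▸ h)
      cases hgK : g K with
      | none =>
        by_cases hex : ∃ t0, g t0 = some i
        · obtain ⟨t0, ht0⟩ := hex
          have hK0 := hi1g t0 ht0
          refine ⟨fun t => g (Equiv.swap K t0 t), ⟨?_, ?_⟩, fin _ ?_ ?_, hc.trans (le_of_eq ?_)⟩
          · intro t j hj
            by_cases h1 : t = K
            · subst h1
              simp only [Equiv.swap_apply_left, ht0, Option.some.injEq] at hj
              exact hj ▸ hi2
            · by_cases h2 : t = t0
              · subst h2
                simp [hgK] at hj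
              · simp only [Equiv.swap_apply_of_ne_of_ne h1 h2] at hj
                exact hg.1 _ _ hj
          · intro t t' j h h'
            exact (Equiv.swap K t0).injective (hg.2 _ _ _ h h')
          · intro t ht
            show g _ = _
            rw [Equiv.swap_apply_of_ne_of_ne ht.ne (ht.trans_le hK0).ne]
          · simp [hm, ht0]
          · symm
            refine Finset.card_equiv (Equiv.swap K t0) ?_
            intro t
            simp
        · push Not at hex
          refine ⟨Function.update g K (some i), ⟨?_, ?_⟩, fin _ ?_ ?_,
            hc.trans (Finset.card_le_card ?_)⟩
          · intro t j hj
            by_cases h1 : t = K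
            · subst h1
              simp at hj
              exact hj ▸ hi2
            · rw [Function.update_of_ne h1] at hj
              exact hg.1 _ _ hj
          · intro t t' j h h'
            have := hg.2 t t' j
            simp only [Function.update_apply] at h h'
            grind
          · intro t ht
            rw [Function.update_of_ne ht.ne]
          · simp [hm]
          · intro t
            simp only [Finset.mem_filter, Finset.mem_univ, true_and, Function.update_apply]
            split_ifs <;> simp
      | some i' =>
        have hD : D i ≤ D i' := hi3 i' (fresh i' hgK) (hg.1 _ _ hgK)
        refine ⟨fun t => (g t).map (Equiv.swap i i'), ⟨?_, ?_⟩, fin _ ?_ ?_, hc.trans (le_of_eq ?_)⟩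
        · intro t j hj
          simp only [Option.map_eq_some_iff] at hj
          obtain ⟨a, ha, hj⟩ := hj
          by_cases h1 : a = i
          · subst h1
            rw [Equiv.swap_apply_left] at hj
            subst hj
            exact hA _ _ K t (hi1g t ha) (hg.1 _ _ ha) (hg.1 _ _ hgK) hD
          · by_cases h2 : a = i'
            · subst h2
              rw [Equiv.swap_apply_right] at hj
              subst hj
              rw [hg.2 _ _ _ ha hgK]
              exact hi2
            · rw [Equiv.swap_apply_of_ne_of_ne h1 h2] at hj
              subst hj
              exact hg.1 _ _ ha
        · intro t t' j h h'
          simp only [Option.map_eq_some_iff] at h h'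
          obtain ⟨a, ha, hj⟩ := h
          obtain ⟨a', ha', hj'⟩ := h'
          have : a = a' := (Equiv.swap i i').injective (hj.trans hj'.symm)
          subst this
          exact hg.2 _ _ _ ha ha'
        · intro t ht
          show (g t).map _ = g t
          cases hgt : g t with
          | none => rfl
          | some a =>
            have h1 : a ≠ i := by
              rintro rfl
              exact absurd (hi1g t hgt) (not_le.mpr ht)
            have h2 : a ≠ i' := by
              rintro rfl
              exact absurd (hg.2 _ _ _ hgt hgK) ht.ne
            simp [Equiv.swap_apply_of_ne_of_ne h1 h2]
        · simp [hm, hgK]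
        · simp

/-- **Optimality of the deadline-greedy matching on interval bigraphs.**
Supply positions `s` with ranges `r ≥ 0` and demand positions `d` on the line; supply
`i` is joined to demand `j` iff `|s i - d j| ≤ r i / n`.  The demand nodes are
processed in any non-decreasing order of position (`ord` with `d ∘ ord` monotone);
`matched t` records the supply node matched to the `t`-th processed demand (or `none`).
The greedy rule: if the current demand has an unmatched neighbor, it is matched to an
unmatched neighbor minimizing the deadline `s i + r i / n` (ties broken arbitrarily).
Then the resulting set of edges is a maximum-cardinality matching. -/
theorem deadline_greedy_optimal (n : ℕ) (s r d : Fin n → ℝ) (hr : ∀ i, 0 ≤ r i)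
    (ord : Equiv.Perm (Fin n))
    (hord : Monotone fun t => d (ord t))
    (matched : Fin n → Option (Fin n))
    (hstep : ∀ t : Fin n,
      (matched t = none →
        ¬ ∃ i : Fin n, (∀ t' : Fin n, t' < t → matched t' ≠ some i) ∧
          |s i - d (ord t)| ≤ r i / n) ∧
      (∀ i : Fin n, matched t = some i →
        ((∀ t' : Fin n, t' < t → matched t' ≠ some i) ∧ |s i - d (ord t)| ≤ r i / n) ∧
          ∀ i' : Fin n,
            ((∀ t' : Fin n, t' < t → matched t' ≠ some i') ∧
              |s i' - d (ord t)| ≤ r i' / n) →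
            s i + r i / n ≤ s i' + r i' / n))
    (Mg : Finset (Fin n × Fin n))
    (hMg : Mg = Finset.univ.biUnion fun t : Fin n =>
      (matched t).elim ∅ fun i => {(i, ord t)}) :
    IsBipMatching (fun i j => |s i - d j| ≤ r i / n) Mg ∧
      Mg.card = matchingNumber (fun i j => |s i - d j| ≤ r i / n) := by
  have memMg : ∀ e, e ∈ Mg ↔ ∃ t, matched t = some e.1 ∧ e.2 = ord t := by
    rintro ⟨i, j⟩
    rw [hMg]
    simp only [Finset.mem_biUnion, Finset.mem_univ, true_and]
    refine exists_congr fun t => ?_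
    cases matched t with
    | none => simp
    | some a => simp [eq_comm]
  have hinj : ∀ t t' i, matched t = some i → matched t' = some i → t = t' := by
    intro t t' i h h'
    rcases lt_trichotomy t t' with hl | hl | hl
    · exact absurd h ((((hstep t').2 i h').1.1) t hl)
    · exact hl
    · exact absurd h' ((((hstep t).2 i h).1.1) t' hl)
  have hM : IsBipMatching (fun i j => |s i - d j| ≤ r i / n) Mg := by
    refine ⟨?_, ?_⟩
    · rintro ⟨i, j⟩ he
      obtain ⟨t, ht, hj⟩ := (memMg _).1 he
      simp only at ht hj
      subst hj
      exact ((hstep t).2 i ht).1.2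
    · rintro ⟨i, j⟩ he ⟨i', j'⟩ he' hne
      obtain ⟨t, ht, hj⟩ := (memMg _).1 he
      obtain ⟨t', ht', hj'⟩ := (memMg _).1 he'
      simp only at ht hj ht' hj'
      subst hj hj'
      refine ⟨?_, ?_⟩
      · rintro h
        simp only at h
        subst h
        exact hne (by rw [hinj _ _ _ ht ht'])
      · intro h
        have h := ord.injective h
        subst h
        rw [ht] at ht'
        exact hne (by rw [Option.some.inj ht'])
  refine ⟨hM, ?_⟩
  have key : ∀ M : Finset (Fin n × Fin n),
      IsBipMatching (fun i j => |s i - d j| ≤ r i / n) M → M.card ≤ Mg.card := by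
    intro M hMM
    let f : Fin n → Option (Fin n) := fun t =>
      if h : ∃ i, (i, ord t) ∈ M then some h.choose else none
    have hf : ∀ t i, f t = some i → (i, ord t) ∈ M := by
      intro t i h
      simp only [f] at h
      split_ifs at h with h'
      rw [← Option.some.inj h]
      exact h'.choose_spec
    have hf' : ∀ t i, (i, ord t) ∈ M → f t ≠ none := by
      intro t i h
      have : ∃ i, (i, ord t) ∈ M := ⟨i, h⟩
      simp [f, this]
    have hv : GValid (fun i t => |s i - d (ord t)| ≤ r i / n) f := by
      refine ⟨fun t i h => hMM.1 _ (hf t i h), fun t t' i h h' => ?_⟩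
      by_contra hne
      exact (hMM.2 _ (hf t i h) _ (hf t' i h')
        (fun h => hne (ord.injective (Prod.ext_iff.1 h).2))).1 rfl
    obtain ⟨g, -, hag, hc⟩ := greedy_exchange (fun i t => |s i - d (ord t)| ≤ r i / n)
      (fun i => s i + r i / n)
      (by
        intro i i' k t hkt h1 h2 h3
        have := hord hkt
        simp only [abs_le] at *
        constructor <;> linarith [h1.1, h1.2, h2.1, h2.2])
      matched
      (fun t h i hi ha => (hstep t).1 h ⟨i, hi, ha⟩)
      (fun t i h => ⟨((hstep t).2 i h).1.1, ((hstep t).2 i h).1.2,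
        fun i' h1 h2 => ((hstep t).2 i h).2 i' ⟨h1, h2⟩⟩)
      f hv n
    have hgm : g = matched := funext fun t => hag t t.2
    subst hgm
    calc M.card ≤ (Finset.univ.filter fun t => f t ≠ none).card := by
          refine Finset.card_le_card_of_injOn (fun e => ord.symm e.2) ?_ ?_
          · rintro ⟨i, j⟩ he
            simp only [Finset.coe_filter, Finset.mem_univ, true_and, Set.mem_setOf_eq]
            exact hf' _ i (by simpa using he)
          · intro e he e' he' h
            by_contra hne
            exact (hMM.2 e he e' he' hne).2 (ord.symm.injective h)
      _ ≤ _ := hc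
      _ = ((Finset.univ.filter fun t => g t ≠ none).image ord).card :=
          (Finset.card_image_of_injective _ ord.injective).symm
      _ ≤ (Mg.image Prod.snd).card := by
          refine Finset.card_le_card ?_
          intro j hj
          simp only [Finset.mem_image, Finset.mem_filter, Finset.mem_univ, true_and] at hj
          obtain ⟨t, ht, rfl⟩ := hj
          obtain ⟨i, hi⟩ := Option.ne_none_iff_exists'.1 ht
          exact Finset.mem_image.2 ⟨(i, ord t), (memMg _).2 ⟨t, hi, rfl⟩, rfl⟩
      _ ≤ Mg.card := Finset.card_image_le
  unfold matchingNumber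
  symm
  refine IsGreatest.csSup_eq ⟨⟨Mg, hM, rfl⟩, ?_⟩
  rintro c ⟨M, h, rfl⟩
  exact key M h

end
end
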